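/- Let Ω = ℤω₁ + ℤω₂ be a lattice in ℂ with Weierstrass functions ℘, ζ, quasi-periods η₁, η₂, invariants g₂, g₃, and field of endomorphisms k. Let t₁, …, t_s be complex numbers and p₁, …, p_n ∈ ℂ ∖ Ω. Let 0 ≤ s′ ≤ s and 0 ≤ n′ ≤ n be such that the classes of t₁, …, t_{s′} modulo 2πiℚ form a ℚ-basis of the ℚ-vector subspace of ℂ/2πiℚ generated by the classes of t₁, …, t_s, and the classes of p₁, …, p_{n′} modulo ℚω₁ + ℚω₂ form a k-basis of the k-vector subspace of ℂ/(ℚω₁ + ℚω₂) generated by the classes of p₁, …, p_n. Then the field ℚ(t₁, …, t_s, e^{t₁}, …, e^{t_s}, g₂, g₃, ω₁, ω₂, η₁, η₂, p₁, …, p_n, ℘(p₁), …, ℘(p_n), ζ(p₁), …, ζ(p_n)) is a finite extension of the field ℚ(t₁, …, t_{s′}, e^{t₁}, …, e^{t_{s′}}, g₂, g₃, ω₁, ω₂, η₁, η₂, p₁, …, p_{n′}, ℘(p₁), …, ℘(p_{n′}), ζ(p₁), …, ζ(p_{n′})); in particular the two fields have the same algebraic closure in ℂ and the same transcendence degree over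 ℚ. -/

import Mathlib

/-! The fields `K' = ℚ(S')` and `K = ℚ(S)` satisfy `K' ⊆ K`, and both are finitely generated, so
everything follows once each of the generators of `K` is known to be algebraic over `K'`. Let `F` be
the relative algebraic closure of `K'` in `ℂ`: an algebraically closed field which contains the
invariants, the periods and the quasi-periods (`GoodField`).

* The set of all `z ∈ F` with `℘(z), ζ(z) ∈ F` is a group (`GoodField.pts`; at the poles both
  functions take the value `0`, which does no harm). This follows from the addition formulas
  `(ζ(u+v) - ζ(u) - ζ(v))² = ℘(u+v) + ℘(u) + ℘(v)` (`zdef_sq`) and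
  `2 (ζ(u+v) - ζ(u) - ζ(v)) (℘(u) - ℘(v)) = ℘'(u) - ℘'(v)` (`zdef_mul`), the first of which is
  Liouville's theorem for elliptic functions and the second a consequence by differentiation.
* This group is divisible, because `℘(mz)` is a nonconstant rational function of `℘(z)` over
  `ℚ(g₂, g₃)` (`exists_divPoly`). Hence it contains `ℚω₁ + ℚω₂`.
* It is stable under multiplication by the field of endomorphisms
  (`GoodField.endQ_mul_mem_pts`). If `αΩ ⊆ Ω` then `z ↦ ℘(αz)` is elliptic with explicit double
  poles on `α⁻¹Ω`, so that it is expressed through the functions `℘(z + t)`, where `t` runs over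
  representatives of `α⁻¹Ω / Ω` (`P_cm`); integrating, `ζ(αz)` is expressed through the
  `ζ(z + t)`.
* By the Legendre relation `η₁ω₂ - η₂ω₁` is a nonzero integer multiple of `2πi`, whence `2πi ∈ F`.
  Only nonvanishing is needed (`exists_legendre`, `legendre_ne_zero`). The set of all `t ∈ F` with
  `e^t ∈ F` is therefore a `ℚ`-vector space containing `2πi`.

So the spanning hypotheses put all the generators in `F`. The link with the elliptic functions of
Mathlib is the logarithmic derivative of the product for `σ` (`logDeriv_sigmaReg`), which gives
`ζ' = -℘` off the lattice. -/

open Complex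

noncomputable section

/-- The lattice `ℤω₁ + ℤω₂`, as a set of complex numbers. -/
def LatticePts (ω₁ ω₂ : ℂ) : Set ℂ := {z | ∃ m n : ℤ, z = m * ω₁ + n * ω₂}

/-- `ω₁, ω₂` are the basis of a lattice: they are `ℝ`-linearly independent. -/
def IsLatticeBasis (ω₁ ω₂ : ℂ) : Prop := LinearIndependent ℝ ![ω₁, ω₂]

/-- The nonzero lattice points. -/
def LatticePts' (ω₁ ω₂ : ℂ) : Set ℂ := {w | w ∈ LatticePts ω₁ ω₂ ∧ w ≠ 0}

/-- The Weierstrass sigma function of the lattice `ℤω₁ + ℤω₂`: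
`σ(z) = z ∏_{ω ∈ Ω∖{0}} (1 − z/ω) exp(z/ω + z²/(2ω²))`. -/
def wSigma (ω₁ ω₂ : ℂ) (z : ℂ) : ℂ :=
  z * ∏' w : LatticePts' ω₁ ω₂,
    (1 - z / (w : ℂ)) * Complex.exp (z / w + z ^ 2 / (2 * (w : ℂ) ^ 2))

/-- The Weierstrass zeta function `ζ = σ'/σ`. -/
def wZeta (ω₁ ω₂ : ℂ) (z : ℂ) : ℂ := deriv (wSigma ω₁ ω₂) z / wSigma ω₁ ω₂ z

/-- The Weierstrass elliptic function `℘ = -ζ'`. -/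
def wP (ω₁ ω₂ : ℂ) (z : ℂ) : ℂ := - deriv (wZeta ω₁ ω₂) z

/-- The invariant `g₂ = 60 Σ_{ω ∈ Ω∖{0}} ω⁻⁴` of the lattice. -/
def g2 (ω₁ ω₂ : ℂ) : ℂ := 60 * ∑' w : LatticePts' ω₁ ω₂, ((w : ℂ) ^ 4)⁻¹

/-- The invariant `g₃ = 140 Σ_{ω ∈ Ω∖{0}} ω⁻⁶` of the lattice. -/
def g3 (ω₁ ω₂ : ℂ) : ℂ := 140 * ∑' w : LatticePts' ω₁ ω₂, ((w : ℂ) ^ 6)⁻¹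

/-- The quasi-period `η(ω) = ζ(z + ω) − ζ(z)` (independent of `z`; we evaluate at the
point `(ω₁+ω₂)/3`, which is never a pole of `ζ`, nor is its translate by a lattice point). -/
def wEta (ω₁ ω₂ : ℂ) (ω : ℂ) : ℂ :=
  wZeta ω₁ ω₂ ((ω₁ + ω₂) / 3 + ω) - wZeta ω₁ ω₂ ((ω₁ + ω₂) / 3)

/-- The field of endomorphisms `k = {α ∈ ℂ : αΩ ⊆ Ω} ⊗_ℤ ℚ`, as a set of complex numbers:
the `α ∈ ℂ` such that `mα` stabilizes the lattice for some nonzero integer `m`. -/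
def endQ (ω₁ ω₂ : ℂ) : Set ℂ :=
  {α | ∃ m : ℤ, m ≠ 0 ∧ ∀ w ∈ LatticePts ω₁ ω₂, (m : ℂ) * α * w ∈ LatticePts ω₁ ω₂}

/-- The transcendence degree over `ℚ` of the subfield `ℚ(S)` of `ℂ` generated by `S` is
at least `d`: there are `d` algebraically independent elements in `ℚ(S)`. -/
def trdegGe (S : Set ℂ) (d : ℕ) : Prop :=
  ∃ x : Fin d → ℂ, (∀ i, x i ∈ IntermediateField.adjoin ℚ S) ∧ AlgebraicIndependent ℚ x

/-- The set of generators `{g₂, g₃, ω₁, ω₂, η₁, η₂, tₗ, e^{tₗ}, pᵢ, ℘(pᵢ), ζ(pᵢ)}`. -/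
def genSet (ω₁ ω₂ : ℂ) {s n : ℕ} (t : Fin s → ℂ) (p : Fin n → ℂ) : Set ℂ :=
  ({g2 ω₁ ω₂, g3 ω₁ ω₂, ω₁, ω₂, wEta ω₁ ω₂ ω₁, wEta ω₁ ω₂ ω₂} : Set ℂ) ∪
    Set.range t ∪ Set.range (fun ℓ => Complex.exp (t ℓ)) ∪
    Set.range p ∪ Set.range (fun i => wP ω₁ ω₂ (p i)) ∪
    Set.range (fun i => wZeta ω₁ ω₂ (p i))

section Helpers

open Filter Topology PeriodPair


/-! ### The zeta function as a lattice sum -/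

/-- The Weierstrass zeta function with its pole at the origin removed, as the lattice sum
`∑_{l ≠ 0} (1/(z-l) + 1/l + z/l²)`. -/
def zetaReg (L : PeriodPair) (z : ℂ) : ℂ :=
  ∑' l : L.lattice, if l.1 = 0 then 0 else (1 / (z - l) + 1 / l + z / l ^ 2)

lemma zeta_summand_bound (r : ℝ) (hr : 0 < r) (z : ℂ) (hz : ‖z‖ < r) (l : ℂ) (h : 2 * r ≤ ‖l‖) :
    ‖1 / (z - l) + 1 / l + z / l ^ 2‖ ≤ 2 * r ^ 2 * ‖l‖ ^ (-3 : ℝ) := by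
  have hl : 0 < ‖l‖ := by linarith
  have hl0 : l ≠ 0 := norm_pos_iff.mp hl
  have hzl : ‖l‖ / 2 ≤ ‖z - l‖ := by
    have := norm_sub_norm_le l z
    rw [norm_sub_rev] at this
    linarith
  have hzl0 : z - l ≠ 0 := norm_pos_iff.mp (by linarith)
  have e : 1 / (z - l) + 1 / l + z / l ^ 2 = z ^ 2 / (l ^ 2 * (z - l)) := by
    field_simp
    ring
  rw [e, norm_div, norm_mul, norm_pow, norm_pow, Real.rpow_neg hl.le, ← div_eq_mul_inv,
    show (3 : ℝ) = ((3 : ℕ) : ℝ) by norm_num, Real.rpow_natCast]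
  have h1 : ‖z‖ ^ 2 ≤ r ^ 2 := by gcongr
  calc ‖z‖ ^ 2 / (‖l‖ ^ 2 * ‖z - l‖) ≤ r ^ 2 / (‖l‖ ^ 2 * (‖l‖ / 2)) := by gcongr
    _ = 2 * r ^ 2 / ‖l‖ ^ 3 := by field_simp

lemma hasSumLocallyUniformly_zetaReg (L : PeriodPair) :
    HasSumLocallyUniformly
      (fun (l : L.lattice) (z : ℂ) ↦ if l.1 = 0 then 0 else (1 / (z - l) + 1 / l + z / l ^ 2))
      (zetaReg L) := by
  refine L.hasSumLocallyUniformly_aux (u := (fun r l ↦ 2 * r ^ 2 * ‖l‖ ^ (-3 : ℝ))) _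
    (fun _ _ ↦ (ZLattice.summable_norm_rpow _ _ (by simp; norm_num)).mul_left _) fun r hr ↦
    Filter.eventually_atTop.mpr ⟨2 * r, ?_⟩
  rintro _ h s hs l rfl
  split_ifs
  · rw [norm_zero]; positivity
  · exact zeta_summand_bound r hr s hs l h

lemma differentiableOn_zetaReg_summand (L : PeriodPair) (l : L.lattice) :
    DifferentiableOn ℂ (fun z : ℂ ↦ if l.1 = 0 then 0 else (1 / (z - l) + 1 / (l : ℂ) + z / l ^ 2))
      (L.lattice \ {0})ᶜ := by
  split_ifs with h
  · fun_prop
  · refine .add (.add (.div (by fun_prop) (by fun_prop) fun x hx ↦ ?_) (by fun_prop)) (by fun_prop)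
    rw [sub_ne_zero]
    rintro rfl
    exact hx ⟨l.2, h⟩

lemma differentiableOn_zetaReg (L : PeriodPair) :
    DifferentiableOn ℂ (zetaReg L) (L.lattice \ {0})ᶜ :=
  (hasSumLocallyUniformly_zetaReg L).hasSumLocallyUniformlyOn.differentiableOn
    (.of_forall fun _ ↦ .fun_sum fun i _ ↦ differentiableOn_zetaReg_summand L i)
    L.isOpen_compl_lattice_sdiff

lemma deriv_zetaReg (L : PeriodPair) :
    Set.EqOn (deriv (zetaReg L)) (fun z ↦ - L.weierstrassPExcept 0 z) (L.lattice \ {0})ᶜ := by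
  refine ((hasSumLocallyUniformly_zetaReg L).tendstoLocallyUniformlyOn.deriv
    (.of_forall fun s ↦ .fun_sum fun i _ ↦ differentiableOn_zetaReg_summand L i)
    L.isOpen_compl_lattice_sdiff).unique ?_
  refine ((L.hasSumLocallyUniformly_weierstrassPExcept 0).tendstoLocallyUniformlyOn (s := (L.lattice \ {0})ᶜ)).fun_neg.congr ?_
  intro s z hz
  have hopen : IsOpen ((L.lattice \ {0} : Set ℂ)ᶜ) := L.isOpen_compl_lattice_sdiff
  simp only [Function.comp_apply]
  rw [deriv_fun_sum (fun i _ ↦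
    (differentiableOn_zetaReg_summand L i).differentiableAt (hopen.mem_nhds hz)),
    ← Finset.sum_neg_distrib]
  refine Finset.sum_congr rfl fun l _ ↦ ?_
  split_ifs with hl
  · simp
  have hzl : z - l ≠ 0 := by
    rw [sub_ne_zero]
    rintro rfl
    exact hz ⟨l.2, hl⟩
  have h1 : HasDerivAt (fun z : ℂ ↦ 1 / (z - l) + 1 / (l : ℂ) + z / l ^ 2)
      (-1 / (z - l) ^ 2 + 0 + 1 / (l : ℂ) ^ 2) z := by
    refine .add (.add ?_ (hasDerivAt_const _ _)) ((hasDerivAt_id z).div_const _)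
    simpa [one_div] using ((hasDerivAt_id z).sub_const (l : ℂ)).fun_inv hzl
  rw [h1.deriv]
  ring

lemma hasDerivAt_zetaReg (L : PeriodPair) {z : ℂ} (hz : z ∈ (L.lattice \ {0} : Set ℂ)ᶜ) :
    HasDerivAt (zetaReg L) (- L.weierstrassPExcept 0 z) z := by
  have := ((differentiableOn_zetaReg L).differentiableAt
    (L.isOpen_compl_lattice_sdiff.mem_nhds hz)).hasDerivAt
  rwa [deriv_zetaReg L hz] at this

lemma zetaReg_neg (L : PeriodPair) (z : ℂ) : zetaReg L (-z) = - zetaReg L z := by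
  simp only [zetaReg]
  rw [← (Equiv.neg L.lattice).tsum_eq, ← tsum_neg]
  congr 1 with l
  simp only [Equiv.neg_apply, NegMemClass.coe_neg, neg_eq_zero]
  split_ifs with h
  · simp
  · rw [show -z - -(l : ℂ) = -(z - l) by ring]
    simp only [one_div, inv_neg, neg_div, even_two, Even.neg_pow]
    ring

lemma zetaReg_zero (L : PeriodPair) : zetaReg L 0 = 0 := by
  have := zetaReg_neg L 0
  rw [neg_zero] at this
  exact CharZero.eq_neg_self_iff.mp this

/-! ### The sigma function -/

/-- The Weierstrass primary factor of genus 2. -/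
def primFac (u : ℂ) : ℂ := (1 - u) * Complex.exp (u + u ^ 2 / 2)

lemma hasDerivAt_primFac (u : ℂ) :
    HasDerivAt primFac (- u ^ 2 * Complex.exp (u + u ^ 2 / 2)) u := by
  have h1 : HasDerivAt (fun u : ℂ ↦ 1 - u) (-1) u := by
    simpa using (hasDerivAt_id' u).const_sub (1 : ℂ)
  have h2 : HasDerivAt (fun u : ℂ ↦ u + u ^ 2 / 2) (1 + u) u := by
    have := (hasDerivAt_id' u).fun_add (((hasDerivAt_id' u).fun_pow 2).div_const 2)
    convert! this using 1
    simp
  have := h1.mul h2.cexp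
  convert! this using 1
  ring

lemma norm_primFac_sub_one_le {u : ℂ} (hu : ‖u‖ ≤ 1) :
    ‖primFac u - 1‖ ≤ Real.exp 2 * ‖u‖ ^ 3 := by
  have h := (convex_closedBall (0 : ℂ) ‖u‖).norm_image_sub_le_of_norm_hasDerivWithin_le
    (f := primFac) (C := Real.exp 2 * ‖u‖ ^ 2) (x := 0) (y := u)
    (fun x _ ↦ (hasDerivAt_primFac x).hasDerivWithinAt) (fun x hx ↦ ?_) (by simp) (by simp)
  · simpa [primFac, pow_succ, mul_assoc] using h
  · have hx' : ‖x‖ ≤ ‖u‖ := by simpa using hx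
    have hx1 : ‖x‖ ≤ 1 := hx'.trans hu
    rw [norm_mul, norm_neg, norm_pow, mul_comm]
    gcongr
    refine (Complex.norm_exp_le_exp_norm _).trans (Real.exp_le_exp.mpr ?_)
    refine (norm_add_le _ _).trans ?_
    rw [norm_div, norm_pow]
    have : ‖x‖ ^ 2 ≤ 1 := pow_le_one₀ (norm_nonneg _) hx1
    simp
    linarith

/-- The Weierstrass product without the factor `z`. -/
def sigmaReg (L : PeriodPair) (z : ℂ) : ℂ :=
  ∏' w : LatticePts' L.ω₁ L.ω₂, primFac (z / w)

lemma mem_latticePts_iff (L : PeriodPair) {z : ℂ} : z ∈ LatticePts L.ω₁ L.ω₂ ↔ z ∈ L.lattice := by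
  rw [PeriodPair.mem_lattice]
  exact ⟨fun ⟨m, n, h⟩ ↦ ⟨m, n, h.symm⟩, fun ⟨m, n, h⟩ ↦ ⟨m, n, h.symm⟩⟩

lemma wSigma_eq (L : PeriodPair) : wSigma L.ω₁ L.ω₂ = fun z ↦ z * sigmaReg L z := by
  ext z
  simp only [wSigma, sigmaReg, primFac]
  congr! 6 with w
  ring

/-- The nonzero lattice points as a subtype of the lattice. -/
def toLat (L : PeriodPair) (w : LatticePts' L.ω₁ L.ω₂) : L.lattice :=
  ⟨w, (mem_latticePts_iff L).mp w.2.1⟩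

lemma toLat_injective (L : PeriodPair) : Function.Injective (toLat L) :=
  fun _ _ h ↦ Subtype.ext (congrArg (fun l : L.lattice ↦ (l : ℂ)) h)

lemma summable_latticePts' (L : PeriodPair) :
    Summable (fun w : LatticePts' L.ω₁ L.ω₂ ↦ ‖(w : ℂ)‖ ^ (-3 : ℝ)) := by
  have h : Summable fun l : L.lattice ↦ ‖l‖ ^ (-3 : ℝ) :=
    ZLattice.summable_norm_rpow _ _ (by simp; norm_num)
  have h2 := h.comp_injective (toLat_injective L)
  refine h2.congr fun w ↦ ?_
  rw [Function.comp_apply, Submodule.coe_norm, toLat]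

lemma finite_latticePts'_norm_lt (L : PeriodPair) (R : ℝ) :
    ∀ᶠ w : LatticePts' L.ω₁ L.ω₂ in cofinite, R ≤ ‖(w : ℂ)‖ := by
  have h : ∀ᶠ l : L.lattice in cofinite, R ≤ ‖(l : ℂ)‖ := by
    refine (isCompact_iff_finite.mp (isCompact_closedBall (0 : L.lattice) R)).subset ?_
    intro l hl
    simp only [Set.mem_compl_iff, Set.mem_ofPred_eq, not_le] at hl
    simpa using hl.le
  exact (toLat_injective L).tendsto_cofinite.eventually h

lemma primFac_bound {r : ℝ} (hr : 0 < r) {z w : ℂ} (hz : ‖z‖ ≤ r) (hw : r ≤ ‖w‖) :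
    ‖primFac (z / w) - 1‖ ≤ Real.exp 2 * r ^ 3 * ‖w‖ ^ (-3 : ℝ) := by
  have hw0 : 0 < ‖w‖ := by linarith
  refine (norm_primFac_sub_one_le ?_).trans ?_
  · rw [norm_div]
    exact div_le_one_of_le₀ (hz.trans hw) hw0.le
  · rw [norm_div, div_pow, Real.rpow_neg hw0.le, show (3 : ℝ) = ((3 : ℕ) : ℝ) by norm_num,
      Real.rpow_natCast, mul_assoc, ← div_eq_mul_inv]
    gcongr

lemma differentiable_primFac : Differentiable ℂ primFac :=
  fun u ↦ (hasDerivAt_primFac u).differentiableAt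

lemma hasProdLocallyUniformlyOn_sigmaReg (L : PeriodPair) :
    HasProdLocallyUniformlyOn (fun (w : LatticePts' L.ω₁ L.ω₂) z ↦ primFac (z / w))
      (sigmaReg L) Set.univ := by
  refine hasProdLocallyUniformlyOn_of_forall_compact isOpen_univ fun K _ hK ↦ ?_
  obtain ⟨r, hr, hKr⟩ : ∃ r : ℝ, 0 < r ∧ ∀ z ∈ K, ‖z‖ ≤ r := by
    obtain ⟨r, hr⟩ := hK.isBounded.exists_norm_le
    exact ⟨max r 1, by positivity, fun z hz ↦ (hr z hz).trans (le_max_left _ _)⟩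
  have := Summable.hasProdUniformlyOn_one_add (R := ℂ) hK
    (f := fun (w : LatticePts' L.ω₁ L.ω₂) z ↦ primFac (z / w) - 1)
    ((summable_latticePts' L).mul_left (Real.exp 2 * r ^ 3)) ?_ ?_
  · simpa only [add_sub_cancel, sigmaReg] using! this
  · filter_upwards [finite_latticePts'_norm_lt L r] with w hw z hz
    exact primFac_bound hr (hKr z hz) hw
  · intro w
    exact (((differentiable_primFac.continuous).comp (by fun_prop)).sub
      continuous_const).continuousOn

lemma differentiable_sigmaReg (L : PeriodPair) : Differentiable ℂ (sigmaReg L) := by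
  rw [← differentiableOn_univ]
  refine (hasProdLocallyUniformlyOn_sigmaReg L).differentiableOn
    (.of_forall fun s ↦ ?_) isOpen_univ
  refine DifferentiableOn.fun_finsetProd fun w _ ↦ ?_
  exact (differentiable_primFac.comp (by fun_prop)).differentiableOn

lemma primFac_ne_zero {u : ℂ} (hu : u ≠ 1) : primFac u ≠ 0 :=
  mul_ne_zero (sub_ne_zero.mpr hu.symm) (Complex.exp_ne_zero _)

lemma primFac_div_ne_zero (L : PeriodPair) {z : ℂ} (hz : z ∈ (L.lattice \ {0} : Set ℂ)ᶜ)
    (w : LatticePts' L.ω₁ L.ω₂) : primFac (z / w) ≠ 0 := by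
  refine primFac_ne_zero fun h ↦ ?_
  rw [div_eq_one_iff_eq w.2.2] at h
  exact hz ⟨h ▸ (toLat L w).2, h ▸ w.2.2⟩

lemma sigmaReg_ne_zero (L : PeriodPair) {z : ℂ} (hz : z ∈ (L.lattice \ {0} : Set ℂ)ᶜ) :
    sigmaReg L z ≠ 0 := by
  have := tprod_one_add_ne_zero_of_summable (R := ℂ)
    (f := fun w : LatticePts' L.ω₁ L.ω₂ ↦ primFac (z / w) - 1) ?_ ?_
  · simpa only [add_sub_cancel, sigmaReg] using this
  · simpa only [add_sub_cancel] using primFac_div_ne_zero L hz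
  · refine Summable.of_norm_bounded_eventually
      ((summable_latticePts' L).mul_left (Real.exp 2 * (‖z‖ + 1) ^ 3)) ?_
    filter_upwards [finite_latticePts'_norm_lt L (‖z‖ + 1)] with w hw
    rw [norm_norm]
    exact primFac_bound (by positivity) (by linarith) hw

lemma logDeriv_primFac_div {z w : ℂ} (hw : w ≠ 0) (hz : z ≠ w) :
    logDeriv (fun z ↦ primFac (z / w)) z = 1 / (z - w) + 1 / w + z / w ^ 2 := by
  have h : HasDerivAt (fun z ↦ primFac (z / w)) _ z :=
    HasDerivAt.comp (h₂ := primFac) z (hasDerivAt_primFac (z / w))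
      ((hasDerivAt_id' z).div_const w)
  rw [logDeriv_apply, h.deriv, primFac]
  have := Complex.exp_ne_zero (z / w + (z / w) ^ 2 / 2)
  have h1 : z - w ≠ 0 := sub_ne_zero.mpr hz
  have h2 : w - z ≠ 0 := sub_ne_zero.mpr hz.symm
  have h3 : 1 - z / w ≠ 0 := by
    rw [one_sub_div hw]
    exact div_ne_zero h2 hw
  generalize Complex.exp (z / w + (z / w) ^ 2 / 2) = E at *
  field_simp
  ring

lemma tsum_latticePts' (L : PeriodPair) (f : ℂ → ℂ) :
    ∑' w : LatticePts' L.ω₁ L.ω₂, f w = ∑' l : L.lattice, if l.1 = 0 then 0 else f l := by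
  have := (toLat_injective L).tsum_eq (f := fun l : L.lattice ↦ if l.1 = 0 then 0 else f l) ?_
  · rw [← this]
    refine tsum_congr fun w ↦ ?_
    have : (toLat L w : ℂ) ≠ 0 := w.2.2
    rw [if_neg this, toLat]
  · intro l hl
    have hl0 : l.1 ≠ 0 := by
      intro h
      simp only [Function.mem_support, h, if_true, ne_eq, not_true] at hl
    exact ⟨⟨l, (mem_latticePts_iff L).mpr l.2, hl0⟩, rfl⟩

lemma logDeriv_sigmaReg (L : PeriodPair) {z : ℂ} (hz : z ∈ (L.lattice \ {0} : Set ℂ)ᶜ) :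
    logDeriv (sigmaReg L) z = zetaReg L z := by
  have hld (w : LatticePts' L.ω₁ L.ω₂) :
      logDeriv (fun z ↦ primFac (z / w)) z = 1 / (z - w) + 1 / w + z / (w : ℂ) ^ 2 := by
    refine logDeriv_primFac_div w.2.2 fun h ↦ ?_
    exact hz ⟨h ▸ (toLat L w).2, h ▸ w.2.2⟩
  have := logDeriv_tprod_eq_tsum (f := fun (w : LatticePts' L.ω₁ L.ω₂) z ↦ primFac (z / w))
    isOpen_univ (Set.mem_univ z) (primFac_div_ne_zero L hz)
    (fun w ↦ (differentiable_primFac.comp (by fun_prop)).differentiableOn) ?_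
    (hasProdLocallyUniformlyOn_sigmaReg L).multipliableLocallyUniformlyOn (sigmaReg_ne_zero L hz)
  · refine Eq.trans ?_ (this.trans ?_)
    · rfl
    · simp_rw [hld]
      exact tsum_latticePts' L (fun w ↦ 1 / (z - w) + 1 / w + z / w ^ 2)
  · simp_rw [hld]
    have h := ((hasSumLocallyUniformly_zetaReg L).hasSum (x := z)).summable.comp_injective
      (toLat_injective L)
    refine h.congr fun w ↦ ?_
    have : (toLat L w : ℂ) ≠ 0 := w.2.2
    rw [Function.comp_apply, if_neg this, toLat]


/-! ### Basic properties of the Weierstrass zeta function -/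

/-- The Weierstrass zeta function of a period pair. -/
def zet (L : PeriodPair) (z : ℂ) : ℂ := wZeta L.ω₁ L.ω₂ z

lemma isOpen_compl_lattice (L : PeriodPair) : IsOpen ((L.lattice : Set ℂ)ᶜ) :=
  L.isClosed_lattice.isOpen_compl

lemma eventually_notMem (L : PeriodPair) {z : ℂ} (hz : z ∉ L.lattice) :
    ∀ᶠ w in 𝓝 z, w ∉ L.lattice :=
  (isOpen_compl_lattice L).mem_nhds hz

lemma eventually_notMem_punctured (L : PeriodPair) (z : ℂ) :
    ∀ᶠ w in 𝓝[≠] z, w ∉ L.lattice := by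
  filter_upwards [nhdsWithin_le_nhds (L.compl_lattice_sdiff_singleton_mem_nhds z),
    self_mem_nhdsWithin] with w hw hne hL
  exact hw ⟨hL, hne⟩

lemma countable_lattice (L : PeriodPair) : (L.lattice : Set ℂ).Countable :=
  countable_of_Lindelof_of_discrete (X := L.lattice)

lemma isPreconnected_compl_lattice (L : PeriodPair) : IsPreconnected ((L.lattice : Set ℂ)ᶜ) :=
  (Set.Countable.isConnected_compl_of_one_lt_rank (by simp) (countable_lattice L)).2

lemma notMem_sdiff (L : PeriodPair) {z : ℂ} (hz : z ∉ L.lattice) :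
    z ∈ (L.lattice \ {0} : Set ℂ)ᶜ := fun h ↦ hz h.1

lemma ne_zero_of_notMem (L : PeriodPair) {z : ℂ} (hz : z ∉ L.lattice) : z ≠ 0 := by
  rintro rfl
  exact hz (zero_mem _)

lemma zet_eq (L : PeriodPair) {z : ℂ} (hz : z ∉ L.lattice) :
    zet L z = 1 / z + zetaReg L z := by
  have h0 := ne_zero_of_notMem L hz
  have h1 := logDeriv_sigmaReg L (notMem_sdiff L hz)
  have h2 := sigmaReg_ne_zero L (notMem_sdiff L hz)
  have h3 : HasDerivAt (fun z ↦ z * sigmaReg L z) _ z :=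
    (hasDerivAt_id' z).fun_mul (differentiable_sigmaReg L z).hasDerivAt
  rw [zet, wZeta, wSigma_eq, h3.deriv, ← h1, logDeriv_apply]
  field_simp

lemma wSigma_eq_zero (L : PeriodPair) {z : ℂ} (hz : z ∈ L.lattice) : wSigma L.ω₁ L.ω₂ z = 0 := by
  rw [wSigma_eq]
  by_cases h0 : z = 0
  · simp [h0]
  refine mul_eq_zero_of_right _ (tprod_of_exists_eq_zero ⟨⟨z, (mem_latticePts_iff L).mpr hz, h0⟩, ?_⟩)
  simp [primFac, h0]

/-- At a lattice point the quotient `σ'/σ` has denominator zero, so `ζ` takes the value zero. -/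
lemma zet_lat (L : PeriodPair) {z : ℂ} (hz : z ∈ L.lattice) : zet L z = 0 := by
  rw [zet, wZeta, wSigma_eq_zero L hz, div_zero]

lemma weierstrassP_eq (L : PeriodPair) (z : ℂ) : ℘[L] z = L.weierstrassPExcept 0 z + 1 / z ^ 2 := by
  have := L.weierstrassPExcept_add 0 z
  simp only [Submodule.coe_zero, sub_zero, ne_eq, OfNat.ofNat_ne_zero, not_false_eq_true,
    zero_pow, div_zero] at this
  exact this.symm

lemma hasDerivAt_zet (L : PeriodPair) {z : ℂ} (hz : z ∉ L.lattice) :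
    HasDerivAt (zet L) (- ℘[L] z) z := by
  have h0 := ne_zero_of_notMem L hz
  have h1 : HasDerivAt (fun z : ℂ ↦ 1 / z + zetaReg L z) (- (z ^ 2)⁻¹ + - L.weierstrassPExcept 0 z) z := by
    refine HasDerivAt.fun_add ?_ (hasDerivAt_zetaReg L (notMem_sdiff L hz))
    have h := hasDerivAt_inv h0
    exact h.congr_of_eventuallyEq (.of_forall fun w ↦ one_div w)
  rw [weierstrassP_eq]
  convert! h1.congr_of_eventuallyEq ?_ using 1
  · ring
  · filter_upwards [eventually_notMem L hz] with w hw using zet_eq L hw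

lemma wP_eq (L : PeriodPair) {z : ℂ} (hz : z ∉ L.lattice) : wP L.ω₁ L.ω₂ z = ℘[L] z := by
  rw [wP, show wZeta L.ω₁ L.ω₂ = zet L from rfl, (hasDerivAt_zet L hz).deriv, neg_neg]

lemma zet_neg (L : PeriodPair) (z : ℂ) : zet L (-z) = - zet L z := by
  by_cases hz : z ∈ L.lattice
  · rw [zet_lat L hz, zet_lat L (neg_mem hz), neg_zero]
  · rw [zet_eq L hz, zet_eq L (by simpa using hz), zetaReg_neg]
    ring

lemma weierstrassP_lat (L : PeriodPair) {z : ℂ} (hz : z ∈ L.lattice) : ℘[L] z = 0 := by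
  have := L.weierstrassP_add_coe 0 ⟨z, hz⟩
  simp only [zero_add] at this
  rw [this, weierstrassP_eq]
  simp

lemma g2_eq (L : PeriodPair) : g2 L.ω₁ L.ω₂ = L.g₂ := by
  rw [g2, PeriodPair.g₂, PeriodPair.G, tsum_latticePts' L (fun w ↦ (w ^ 4)⁻¹)]
  congr! 3 with l
  split_ifs with h
  · simp [h]
  · rfl

lemma g3_eq (L : PeriodPair) : g3 L.ω₁ L.ω₂ = L.g₃ := by
  rw [g3, PeriodPair.g₃, PeriodPair.G, tsum_latticePts' L (fun w ↦ (w ^ 6)⁻¹)]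
  congr! 3 with l
  split_ifs with h
  · simp [h]
  · rfl

/-! ### Quasi-periodicity -/

lemma third_notMem (L : PeriodPair) : (L.ω₁ + L.ω₂) / 3 ∉ L.lattice := by
  have := (mul_ω₁_add_mul_ω₂_mem_lattice (L := L) (α := 1 / 3) (β := 1 / 3)).not.mpr (by
    norm_num)
  convert! this using 2
  push_cast
  ring

/-- The quasi-period of `ζ` attached to a lattice point. -/
def qper (L : PeriodPair) (w : ℂ) : ℂ := wEta L.ω₁ L.ω₂ w

lemma add_notMem (L : PeriodPair) {z w : ℂ} (hw : w ∈ L.lattice) (hz : z ∉ L.lattice) :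
    z + w ∉ L.lattice := by
  rwa [add_mem_cancel_right hw]

lemma wP_add (L : PeriodPair) {w : ℂ} (hw : w ∈ L.lattice) (z : ℂ) : ℘[L] (z + w) = ℘[L] z :=
  L.weierstrassP_add_coe z ⟨w, hw⟩

lemma zet_add (L : PeriodPair) {z w : ℂ} (hw : w ∈ L.lattice) (hz : z ∉ L.lattice) :
    zet L (z + w) = zet L z + qper L w := by
  have hd : ∀ z ∈ (L.lattice : Set ℂ)ᶜ, HasDerivAt (fun z ↦ zet L (z + w) - zet L z) 0 z := by
    intro z hz
    have h1 := (hasDerivAt_zet L (add_notMem L hw hz)).comp_add_const z w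
    have := h1.fun_sub (hasDerivAt_zet L hz)
    rwa [wP_add L hw, sub_self] at this
  have := (isOpen_compl_lattice L).is_const_of_deriv_eq_zero (isPreconnected_compl_lattice L)
    (fun z hz ↦ (hd z hz).differentiableAt.differentiableWithinAt)
    (fun z hz ↦ (hd z hz).deriv) (show z ∈ (L.lattice : Set ℂ)ᶜ from hz)
    (show (L.ω₁ + L.ω₂) / 3 ∈ (L.lattice : Set ℂ)ᶜ from third_notMem L)
  rw [qper, wEta]
  change _ = _ + (zet L _ - zet L _)
  linear_combination this

lemma qper_add (L : PeriodPair) {w w' : ℂ} (hw : w ∈ L.lattice) (hw' : w' ∈ L.lattice) :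
    qper L (w + w') = qper L w + qper L w' := by
  have h0 := third_notMem L
  have h1 := zet_add L (add_mem hw hw') h0
  rw [← add_assoc, zet_add L hw' (add_notMem L hw h0), zet_add L hw h0] at h1
  linear_combination -h1

/-- The quasi-period map as a homomorphism. -/
def qperHom (L : PeriodPair) : L.lattice →+ ℂ where
  toFun w := qper L w
  map_zero' := by
    have := qper_add L (zero_mem _) (zero_mem _)
    rw [add_zero] at this
    simpa using this
  map_add' w w' := qper_add L w.2 w'.2

lemma qper_eq (L : PeriodPair) (m n : ℤ) :
    qper L (m * L.ω₁ + n * L.ω₂) = m * qper L L.ω₁ + n * qper L L.ω₂ := by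
  have h := map_add (qperHom L) (m • ⟨L.ω₁, L.ω₁_mem_lattice⟩) (n • ⟨L.ω₂, L.ω₂_mem_lattice⟩)
  rw [map_zsmul, map_zsmul] at h
  simpa [qperHom] using h


/-! ### Elliptic functions without poles are constant -/

lemma tendsto_add_punctured (w z : ℂ) : Tendsto (· + w) (𝓝[≠] z) (𝓝[≠] (z + w)) := by
  refine tendsto_nhdsWithin_iff.mpr ⟨?_, ?_⟩
  · exact tendsto_nhdsWithin_of_tendsto_nhds ((continuous_add_const w).tendsto z)
  · filter_upwards [self_mem_nhdsWithin] with u hu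
    simpa using hu

lemma tendsto_sub_left_punctured (w z : ℂ) : Tendsto (w - ·) (𝓝[≠] z) (𝓝[≠] (w - z)) := by
  refine tendsto_nhdsWithin_iff.mpr ⟨?_, ?_⟩
  · exact tendsto_nhdsWithin_of_tendsto_nhds ((continuous_sub_left w).tendsto z)
  · filter_upwards [self_mem_nhdsWithin] with u hu
    simpa using hu

lemma tendsto_mul_punctured {a : ℂ} (ha : a ≠ 0) (z : ℂ) :
    Tendsto (a * ·) (𝓝[≠] z) (𝓝[≠] (a * z)) := by
  refine tendsto_nhdsWithin_iff.mpr ⟨?_, ?_⟩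
  · exact tendsto_nhdsWithin_of_tendsto_nhds ((continuous_const_mul a).tendsto z)
  · filter_upwards [self_mem_nhdsWithin] with u hu
    simpa [ha] using hu

/-- Liouville's theorem: a function all of whose singularities are removable and which is periodic
(outside of the singularities) is constant (outside of the singularities). -/
lemma elliptic_liouville (L : PeriodPair) (f : ℂ → ℂ)
    (H1 : ∀ z, ∃ g, AnalyticAt ℂ g z ∧ f =ᶠ[𝓝[≠] z] g)
    (H2 : ∀ w ∈ L.lattice, ∀ z, ∀ᶠ u in 𝓝[≠] z, f (u + w) = f u) :
    ∃ c, ∀ z, ∀ᶠ u in 𝓝[≠] z, f u = c := by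
  choose g hg hfg using H1
  -- The entire function extending `f`.
  set F : ℂ → ℂ := fun z ↦ g z z with hF
  have hFg (z : ℂ) : F =ᶠ[𝓝 z] g z := by
    have h1 : F =ᶠ[𝓝[≠] z] g z := by
      have hgz : ∀ᶠ y in 𝓝[≠] z, AnalyticAt ℂ (g z) y :=
        nhdsWithin_le_nhds (hg z).eventually_analyticAt
      filter_upwards [eventually_eventually_nhdsWithin.mpr (hfg z), hgz, self_mem_nhdsWithin]
        with y hy hgy hne
      have h2 : f =ᶠ[𝓝 y] g z := by
        have : 𝓝[{z}ᶜ] y = 𝓝 y := isOpen_compl_singleton.nhdsWithin_eq hne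
        rwa [this] at hy
      have h3 : g y =ᶠ[𝓝[≠] y] g z := (hfg y).symm.trans (nhdsWithin_le_nhds h2)
      exact (((hg y).continuousAt.eventuallyEq_nhds_iff_eventuallyEq_nhdsNE
        hgy.continuousAt).mp h3).eq_of_nhds
    rw [EventuallyEq, eventually_nhdsWithin_iff] at h1
    filter_upwards [h1] with y hy
    by_cases h : y = z
    · rw [h]
    · exact hy h
  have hFan (z : ℂ) : AnalyticAt ℂ F z := (hg z).congr (hFg z).symm
  have hFf (z : ℂ) : f =ᶠ[𝓝[≠] z] F := (hfg z).trans (nhdsWithin_le_nhds (hFg z).symm)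
  have hFd : Differentiable ℂ F := fun z ↦ (hFan z).differentiableAt
  have hper (w : ℂ) (hw : w ∈ L.lattice) (z : ℂ) : F (z + w) = F z := by
    have h1 : (fun u ↦ F (u + w)) =ᶠ[𝓝[≠] z] F := by
      filter_upwards [H2 w hw z, hFf z, (tendsto_add_punctured w z).eventually (hFf (z + w))]
        with u h1 h2 h3
      rw [← h3, h1, h2]
    exact (((hFd.continuous.comp (continuous_add_const w)).continuousAt.eventuallyEq_nhds_iff_eventuallyEq_nhdsNE
      hFd.continuous.continuousAt).mp h1).eq_of_nhds
  have hb := (IsZLattice.isCompact_range_of_periodic L.lattice F hFd.continuous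
    (fun z w hw ↦ hper w hw z)).isBounded
  refine ⟨F 0, fun z ↦ ?_⟩
  filter_upwards [hFf z] with u hu
  rw [hu]
  exact hFd.apply_eq_apply_of_bounded hb u 0

lemma eq_of_eventually_punctured {f : ℂ → ℂ} {z c : ℂ} (hf : ContinuousAt f z)
    (h : ∀ᶠ u in 𝓝[≠] z, f u = c) : f z = c :=
  ((hf.eventuallyEq_nhds_iff_eventuallyEq_nhdsNE
    (continuousAt_const (y := c))).mp h).eq_of_nhds

/-! ### The addition formulas -/

lemma hasDerivAt_P (L : PeriodPair) {z : ℂ} (hz : z ∉ L.lattice) :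
    HasDerivAt ℘[L] (℘'[L] z) z := by
  have := (L.analyticOnNhd_weierstrassP z hz).differentiableAt.hasDerivAt
  rwa [L.deriv_weierstrassP] at this

lemma analyticAt_P (L : PeriodPair) {z : ℂ} (hz : z ∉ L.lattice) : AnalyticAt ℂ ℘[L] z :=
  L.analyticOnNhd_weierstrassP z hz

lemma analyticAt_P' (L : PeriodPair) {z : ℂ} (hz : z ∉ L.lattice) : AnalyticAt ℂ ℘'[L] z :=
  L.analyticOnNhd_derivWeierstrassP z hz

lemma analyticAt_zet (L : PeriodPair) {z : ℂ} (hz : z ∉ L.lattice) : AnalyticAt ℂ (zet L) z := by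
  have h : DifferentiableOn ℂ (zet L) (L.lattice : Set ℂ)ᶜ :=
    fun z hz ↦ (hasDerivAt_zet L hz).differentiableAt.differentiableWithinAt
  exact h.analyticAt ((isOpen_compl_lattice L).mem_nhds hz)

lemma analyticAt_zetaReg (L : PeriodPair) : AnalyticAt ℂ (zetaReg L) 0 :=
  (differentiableOn_zetaReg L).analyticAt (L.compl_lattice_sdiff_singleton_mem_nhds 0)

lemma analyticAt_add_const {f : ℂ → ℂ} {z v : ℂ} (hf : AnalyticAt ℂ f (z + v)) :
    AnalyticAt ℂ (fun u ↦ f (u + v)) z :=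
  hf.fun_comp_of_eq (by fun_prop) rfl

/-- The defect of additivity of `ζ`. -/
def zdef (L : PeriodPair) (u v : ℂ) : ℂ := zet L (u + v) - zet L u - zet L v

lemma zdef_comm (L : PeriodPair) (u v : ℂ) : zdef L u v = zdef L v u := by
  rw [zdef, zdef, add_comm u v]
  ring

/-- The expansion at `u = 0` in the proof of `zdef_sq`. -/
lemma zdef_sq_aux (L : PeriodPair) {v : ℂ} (hv : v ∉ L.lattice) :
    ∃ g, AnalyticAt ℂ g 0 ∧ g 0 = ℘[L] v ∧
      (fun u ↦ zdef L u v ^ 2 - ℘[L] u - ℘[L] (u + v)) =ᶠ[𝓝[≠] 0] g := by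
  set d : ℂ → ℂ := fun u ↦ zet L (u + v) - zet L v - zetaReg L u with hd
  have hv' : (0 : ℂ) + v ∉ L.lattice := by rwa [zero_add]
  have hda : AnalyticAt ℂ d 0 :=
    ((analyticAt_add_const (analyticAt_zet L hv')).fun_sub analyticAt_const).fun_sub
      (analyticAt_zetaReg L)
  have hd0 : d 0 = 0 := by simp [hd, zetaReg_zero]
  have hd' : HasDerivAt d (- ℘[L] v) 0 := by
    have h1 := ((hasDerivAt_zet L hv').comp_add_const 0 v).sub_const (zet L v)
    have h2 := h1.fun_sub (hasDerivAt_zetaReg L (z := 0) (by simp))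
    simpa [hd] using h2
  have hds : AnalyticAt ℂ (dslope d 0) 0 := by
    obtain ⟨s, hs, hds⟩ := hda.eventually_analyticAt.exists_mem
    have : DifferentiableOn ℂ (dslope d 0) s :=
      (Complex.differentiableOn_dslope hs).mpr
        fun z hz ↦ (hds z hz).differentiableAt.differentiableWithinAt
    exact this.analyticAt hs
  have hPe : AnalyticAt ℂ (L.weierstrassPExcept 0) 0 := L.analyticAt_weierstrassPExcept 0
  refine ⟨fun u ↦ d u ^ 2 - 2 * dslope d 0 u - L.weierstrassPExcept 0 u - ℘[L] (u + v),
    ((((hda.fun_pow 2).fun_sub (analyticAt_const.fun_mul hds))).fun_sub hPe).fun_sub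
      (analyticAt_add_const (analyticAt_P L hv')), ?_, ?_⟩
  · simp only [hd0, dslope_same, hd'.deriv, L.weierstrassPExcept_zero, zero_add]
    ring
  · filter_upwards [self_mem_nhdsWithin, eventually_notMem_punctured L 0] with u hu0 hu
    have hu0' : u ≠ 0 := hu0
    rw [dslope_of_ne _ hu0', slope_def_field, hd0, zdef, zet_eq L hu, weierstrassP_eq L u]
    simp only [hd]
    field_simp
    ring

lemma zdef_sq (L : PeriodPair) {u v : ℂ} (hu : u ∉ L.lattice) (hv : v ∉ L.lattice)
    (huv : u + v ∉ L.lattice) : zdef L u v ^ 2 = ℘[L] (u + v) + ℘[L] u + ℘[L] v := by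
  set f : ℂ → ℂ := fun u ↦ zdef L u v ^ 2 - ℘[L] u - ℘[L] (u + v) with hf
  have hper : ∀ w ∈ L.lattice, ∀ z, ∀ᶠ u in 𝓝[≠] z, f (u + w) = f u := by
    intro w hw z
    filter_upwards [eventually_notMem_punctured L z,
      (tendsto_add_punctured v z).eventually (eventually_notMem_punctured L (z + v))] with u h1 h2
    simp only [hf, zdef]
    rw [show u + w + v = (u + v) + w by ring, zet_add L hw h1, zet_add L hw h2, wP_add L hw,
      wP_add L hw]
    ring
  have hsymm (u : ℂ) : f (-v - u) = f u := by
    simp only [hf, zdef]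
    rw [show -v - u + v = -u by ring, show -v - u = -(u + v) by ring, zet_neg, zet_neg,
      L.weierstrassP_neg, L.weierstrassP_neg]
    ring
  have hana {z : ℂ} (hz : z ∉ L.lattice) (hzv : z + v ∉ L.lattice) : AnalyticAt ℂ f z := by
    have h1 := analyticAt_add_const (analyticAt_zet L hzv)
    have h2 := analyticAt_add_const (analyticAt_P L hzv)
    exact ((((h1.fun_sub (analyticAt_zet L hz)).fun_sub analyticAt_const).fun_pow 2).fun_sub
      (analyticAt_P L hz)).fun_sub h2
  obtain ⟨g, hg, hg0, hfg⟩ := zdef_sq_aux L hv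
  have hlat : ∀ z ∈ L.lattice, ∃ g, AnalyticAt ℂ g z ∧ f =ᶠ[𝓝[≠] z] g := by
    intro z hz
    refine ⟨fun u ↦ g (u + -z), analyticAt_add_const (by simpa using hg), ?_⟩
    have := (tendsto_add_punctured (-z) z)
    rw [add_neg_cancel] at this
    filter_upwards [this.eventually hfg, hper (-z) (neg_mem hz) z] with u h1 h2
    rw [← h1, ← h2]
  have hrem : ∀ z, ∃ g, AnalyticAt ℂ g z ∧ f =ᶠ[𝓝[≠] z] g := by
    intro z
    by_cases hz : z ∈ L.lattice
    · exact hlat z hz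
    by_cases hzv : z + v ∈ L.lattice
    · have hz' : -v - z ∈ L.lattice := by
        rw [show -v - z = -(z + v) by ring]
        exact neg_mem hzv
      obtain ⟨g, hg, hfg⟩ := hlat _ hz'
      refine ⟨fun u ↦ g (-v - u), hg.fun_comp (by fun_prop), ?_⟩
      filter_upwards [(tendsto_sub_left_punctured (-v) z).eventually hfg] with u hu
      rw [← hu, hsymm]
    · exact ⟨f, hana hz hzv, .rfl⟩
  obtain ⟨c, hc⟩ := elliptic_liouville L f hrem hper
  have hc0 : c = ℘[L] v := by
    rw [← hg0]
    refine (eq_of_eventually_punctured hg.continuousAt ?_).symm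
    filter_upwards [hc 0, hfg] with u h1 h2
    rw [← h2, ← h1]
  have := eq_of_eventually_punctured (hana hu huv).continuousAt (hc u)
  simp only [hf] at this
  linear_combination this + hc0

lemma hasDerivAt_zdef (L : PeriodPair) {u v : ℂ} (hu : u ∉ L.lattice)
    (huv : u + v ∉ L.lattice) :
    HasDerivAt (fun u ↦ zdef L u v) (℘[L] u - ℘[L] (u + v)) u := by
  have h := (((hasDerivAt_zet L huv).comp_add_const u v).fun_sub (hasDerivAt_zet L hu)).sub_const
    (zet L v)
  convert! h using 1
  ring

lemma zdef_mul_aux (L : PeriodPair) {u v : ℂ} (hu : u ∉ L.lattice) (hv : v ∉ L.lattice)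
    (huv : u + v ∉ L.lattice) :
    2 * zdef L u v * (℘[L] u - ℘[L] (u + v)) = ℘'[L] (u + v) + ℘'[L] u := by
  have h1 := (hasDerivAt_zdef L hu huv).fun_pow 2
  have h2 := ((((hasDerivAt_P L huv).comp_add_const u v).fun_add (hasDerivAt_P L hu)).add_const
    (℘[L] v))
  have h3 : (fun u ↦ zdef L u v ^ 2) =ᶠ[𝓝 u] fun u ↦ ℘[L] (u + v) + ℘[L] u + ℘[L] v := by
    filter_upwards [eventually_notMem L hu,
      ((continuous_add_const v).tendsto u).eventually (eventually_notMem L huv)] with w h1 h2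
    exact zdef_sq L h1 hv h2
  have := (h2.congr_of_eventuallyEq h3).unique h1
  simp only [pow_one, Nat.cast_ofNat, Nat.add_one_sub_one] at this
  linear_combination -this

/-- The addition theorem for `ζ`. -/
lemma zdef_mul (L : PeriodPair) {u v : ℂ} (hu : u ∉ L.lattice) (hv : v ∉ L.lattice)
    (huv : u + v ∉ L.lattice) :
    2 * zdef L u v * (℘[L] u - ℘[L] v) = ℘'[L] u - ℘'[L] v := by
  have h1 := zdef_mul_aux L hu hv huv
  have h2 := zdef_mul_aux L hv hu (by rwa [add_comm])
  rw [zdef_comm L v u, add_comm v u] at h2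
  linear_combination h1 - h2


/-! ### Values and fibres of `℘` -/

lemma P_not_eventually_const (L : PeriodPair) {v : ℂ} (hv : v ∉ L.lattice) (c : ℂ) :
    ¬ ∀ᶠ u in 𝓝 v, ℘[L] u = c := by
  intro h
  have h1 : Set.EqOn ℘[L] (fun _ ↦ c) (L.lattice : Set ℂ)ᶜ :=
    AnalyticOnNhd.eqOn_of_preconnected_of_eventuallyEq (fun z hz ↦ analyticAt_P L hz)
      (fun _ _ ↦ analyticAt_const) (isPreconnected_compl_lattice L) hv h
  -- Compare with the expansion `z² ℘(z) = 1 + O(z²)` at the origin.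
  have hc : ContinuousAt (fun z ↦ (c - L.weierstrassPExcept 0 z) * z ^ 2) 0 :=
    ((continuousAt_const (y := c)).sub
      (L.analyticAt_weierstrassPExcept 0).continuousAt).mul (by fun_prop)
  have := eq_of_eventually_punctured hc (c := 1) ?_
  · simp at this
  · filter_upwards [self_mem_nhdsWithin, eventually_notMem_punctured L 0] with u hu0 hu
    have hu0' : u ≠ 0 := hu0
    have h2 : ℘[L] u = c := h1 hu
    rw [← h2, weierstrassP_eq]
    field_simp
    ring

/-- A solution of `φ' = 2 h φ` which vanishes at a point vanishes identically. -/
lemma eventually_zero_of_deriv_eq {φ h : ℂ → ℂ} {z : ℂ} (hφ : AnalyticAt ℂ φ z)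
    (hh : ContinuousAt h z) (h0 : φ z = 0) (hd : ∀ᶠ u in 𝓝 z, HasDerivAt φ (2 * h u * φ u) u) :
    ∀ᶠ u in 𝓝 z, φ u = 0 := by
  by_contra hne
  obtain ⟨n, g, hg, hg0, hfg⟩ := hφ.exists_eventuallyEq_pow_smul_nonzero_iff.mpr hne
  have hn : n ≠ 0 := by
    rintro rfl
    have := hfg.self_of_nhds
    simp [h0, hg0.symm] at this
  have hgc : ContinuousAt (deriv g) z := hg.deriv.continuousAt
  have hc : ContinuousAt (fun u ↦ n * g u + (u - z) * (deriv g u - 2 * h u * g u)) z := by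
    have := hg.continuousAt
    fun_prop
  have := eq_of_eventually_punctured hc (c := 0) ?_
  · simp [hn, hg0] at this
  · have e1 := nhdsWithin_le_nhds (s := {z}ᶜ) hfg.eventually_nhds
    have e2 := nhdsWithin_le_nhds (s := {z}ᶜ) hg.eventually_analyticAt
    filter_upwards [self_mem_nhdsWithin, nhdsWithin_le_nhds (s := {z}ᶜ) hd, e1, e2]
      with u hu hdu he hgu
    have huz : u - z ≠ 0 := sub_ne_zero.mpr hu
    have d1 := (((hasDerivAt_id' u).sub_const z).fun_pow n).fun_mul
      hgu.differentiableAt.hasDerivAt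
    have d2 := hdu.congr_of_eventuallyEq (EventuallyEq.symm he)
    simp only [smul_eq_mul] at d2
    have d3 := d1.unique d2
    rw [he.self_of_nhds, smul_eq_mul] at d3
    obtain ⟨m, rfl⟩ := Nat.exists_eq_succ_of_ne_zero hn
    simp only [Nat.succ_eq_add_one, Nat.add_one_sub_one, pow_succ] at d3 ⊢
    apply mul_left_cancel₀ (pow_ne_zero m huz)
    linear_combination d3

lemma P_fibre_aux (L : PeriodPair) {z w : ℂ} (hz : z ∉ L.lattice) (hw : w ∉ L.lattice)
    (hzw : z + w ∉ L.lattice) (h : ℘[L] z = ℘[L] w) : ℘'[L] w ≠ 0 := by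
  intro h'
  have := eventually_zero_of_deriv_eq (φ := fun u ↦ ℘[L] u - ℘[L] w) (h := fun u ↦ zdef L u w)
    (z := z) ((analyticAt_P L hz).fun_sub analyticAt_const)
    (hasDerivAt_zdef L hz hzw).continuousAt (by simp [h]) ?_
  · refine P_not_eventually_const L hz (℘[L] w) ?_
    filter_upwards [this] with u hu
    exact sub_eq_zero.mp hu
  · filter_upwards [eventually_notMem L hz,
      ((continuous_add_const w).tendsto z).eventually (eventually_notMem L hzw)] with u h1 h2
    rw [zdef_mul L h1 hw h2, h', sub_zero]
    exact (hasDerivAt_P L h1).sub_const _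

lemma derivP_ne_zero (L : PeriodPair) {v : ℂ} (hv : v ∉ L.lattice) (h2v : v + v ∉ L.lattice) :
    ℘'[L] v ≠ 0 := P_fibre_aux L hv hv h2v rfl

/-- `℘` is injective up to sign and translation by the lattice. -/
lemma P_fibre (L : PeriodPair) {z w : ℂ} (hz : z ∉ L.lattice) (hw : w ∉ L.lattice)
    (h : ℘[L] z = ℘[L] w) : z + w ∈ L.lattice ∨ z - w ∈ L.lattice := by
  by_contra! hne
  obtain ⟨h1, h2⟩ := hne
  have hw' : -w ∉ L.lattice := by simpa using hw
  have e1 := zdef_mul L hz hw h1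
  have e2 := zdef_mul L hz hw' (by rwa [← sub_eq_add_neg])
  rw [L.weierstrassP_neg, L.derivWeierstrassP_neg] at e2
  refine P_fibre_aux L hz hw h1 h ?_
  rw [h] at e1 e2
  linear_combination (e1 - e2) / 2

lemma P_fibre_countable (L : PeriodPair) (c : ℂ) :
    {z | z ∉ L.lattice ∧ ℘[L] z = c}.Countable := by
  by_cases hne : ∃ w, w ∉ L.lattice ∧ ℘[L] w = c
  · obtain ⟨w, hw, rfl⟩ := hne
    have h1 := (countable_lattice L).preimage (f := fun z ↦ z + w) (add_left_injective w)
    have h2 := (countable_lattice L).preimage (f := fun z ↦ z - w) (sub_left_injective)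
    refine (h1.union h2).mono ?_
    rintro z ⟨hz, hzw⟩
    exact P_fibre L hz hw hzw
  · convert! Set.countable_empty
    ext z
    simp only [Set.mem_ofPred_eq, Set.mem_empty_iff_false, iff_false]
    exact fun h ↦ hne ⟨z, h⟩

/-- The duplication formula, with `h(v,v) = ζ(2v) - 2ζ(v)`. -/
lemma zdef_dup (L : PeriodPair) {v : ℂ} (hv : v ∉ L.lattice) (h2v : v + v ∉ L.lattice) :
    2 * zdef L v v * ℘'[L] v = 6 * ℘[L] v ^ 2 - L.g₂ / 2 := by
  have hP := hasDerivAt_P L hv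
  have hP' := (analyticAt_P' L hv).differentiableAt.hasDerivAt
  have hne := derivP_ne_zero L hv h2v
  have e1 : 2 * zdef L v v * ℘'[L] v = deriv ℘'[L] v := by
    have d1 := ((hasDerivAt_zdef L hv h2v).const_mul 2).fun_mul (hP.sub_const (℘[L] v))
    have d2 := hP'.sub_const (℘'[L] v)
    have := d1.unique (d2.congr_of_eventuallyEq ?_)
    · simpa using this
    · filter_upwards [eventually_notMem L hv,
        ((continuous_add_const v).tendsto v).eventually (eventually_notMem L h2v)] with u h1 h2
      exact zdef_mul L h1 hv h2
  have e2 : 2 * ℘'[L] v * deriv ℘'[L] v = (12 * ℘[L] v ^ 2 - L.g₂) * ℘'[L] v := by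
    have d1 := hP'.fun_pow 2
    have d2 := (((hP.fun_pow 3).const_mul 4).fun_sub (hP.const_mul L.g₂)).sub_const L.g₃
    have := d1.unique (d2.congr_of_eventuallyEq ?_)
    · simp only [Nat.cast_ofNat, Nat.add_one_sub_one, pow_one] at this
      linear_combination this
    · filter_upwards [eventually_notMem L hv] with u hu
      exact L.derivWeierstrassP_sq u hu
  apply mul_left_cancel₀ hne
  rw [e1]
  linear_combination e2 / 2

/-! ### Generic points -/

/-- The points no nonzero multiple of which is a lattice point. -/
def genPts (L : PeriodPair) : Set ℂ := {z | ∀ k : ℤ, k ≠ 0 → (k : ℂ) * z ∉ L.lattice}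

lemma countable_compl_genPts (L : PeriodPair) : (genPts L)ᶜ.Countable := by
  have : (genPts L)ᶜ = ⋃ k : {k : ℤ // k ≠ 0}, (fun z : ℂ ↦ (k : ℤ) * z) ⁻¹' L.lattice := by
    ext z
    simp [genPts]
  rw [this]
  refine Set.countable_iUnion fun k ↦ (countable_lattice L).preimage ?_
  exact mul_right_injective₀ (Int.cast_ne_zero.mpr k.2)

lemma genPts_notMem (L : PeriodPair) {z : ℂ} (hz : z ∈ genPts L) : z ∉ L.lattice := by
  simpa using hz 1 one_ne_zero

lemma countable_genPts_root (L : PeriodPair) {Q : Polynomial ℂ} (hQ : Q ≠ 0) :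
    {z | z ∉ L.lattice ∧ Q.eval (℘[L] z) = 0}.Countable := by
  have : {z | z ∉ L.lattice ∧ Q.eval (℘[L] z) = 0} ⊆
      ⋃ c ∈ (Q.roots.toFinset : Set ℂ), {z | z ∉ L.lattice ∧ ℘[L] z = c} := by
    rintro z ⟨hz, hz0⟩
    simp only [Set.mem_iUnion]
    exact ⟨℘[L] z, by simpa [hQ] using hz0, hz, rfl⟩
  exact (Set.Countable.biUnion (Finset.countable_toSet _) fun c _ ↦ P_fibre_countable L c).mono this

/-- The complement in the set of generic points of a countable set is dense. -/
lemma dense_genPts_diff (L : PeriodPair) {S : Set ℂ} (hS : S.Countable) :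
    Dense (genPts L \ S) := by
  have := ((countable_compl_genPts L).union hS).dense_compl ℝ
  rwa [Set.compl_union, compl_compl, ← Set.sdiff_eq] at this


/-! ### Points with algebraic coordinates -/

/-- A subfield of `ℂ` which is relatively algebraically closed in `ℂ` and which contains the
invariants, the periods and the quasi-periods of the lattice. -/
structure GoodField (L : PeriodPair) (F : Subfield ℂ) : Prop where
  closed : ∀ x : ℂ, IsAlgebraic F x → x ∈ F
  g₂_mem : L.g₂ ∈ F
  g₃_mem : L.g₃ ∈ F
  ω₁_mem : L.ω₁ ∈ F
  ω₂_mem : L.ω₂ ∈ F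
  qper₁_mem : qper L L.ω₁ ∈ F
  qper₂_mem : qper L L.ω₂ ∈ F

namespace GoodField

variable {L : PeriodPair} {F : Subfield ℂ} (hF : GoodField L F)
include hF

lemma mem_of_sq {x : ℂ} (hx : x ^ 2 ∈ F) : x ∈ F := by
  refine hF.closed x (IsAlgebraic.of_pow (n := 2) (by norm_num) ?_)
  exact isAlgebraic_algebraMap (⟨x ^ 2, hx⟩ : F)

lemma mem_of_root {x : ℂ} {Q : Polynomial F} (hQ : Q ≠ 0) (h : Polynomial.aeval x Q = 0) :
    x ∈ F := hF.closed x ⟨Q, hQ, h⟩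

lemma lattice_mem {w : ℂ} (hw : w ∈ L.lattice) : w ∈ F := by
  obtain ⟨m, n, rfl⟩ := PeriodPair.mem_lattice.mp hw
  exact add_mem (mul_mem (intCast_mem F m) hF.ω₁_mem) (mul_mem (intCast_mem F n) hF.ω₂_mem)

lemma qper_mem {w : ℂ} (hw : w ∈ L.lattice) : qper L w ∈ F := by
  obtain ⟨m, n, rfl⟩ := PeriodPair.mem_lattice.mp hw
  rw [qper_eq]
  exact add_mem (mul_mem (intCast_mem F m) hF.qper₁_mem) (mul_mem (intCast_mem F n) hF.qper₂_mem)

lemma derivP_mem {z : ℂ} (hz : z ∉ L.lattice) (h : ℘[L] z ∈ F) : ℘'[L] z ∈ F := by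
  refine hF.mem_of_sq ?_
  rw [L.derivWeierstrassP_sq z hz]
  exact sub_mem (sub_mem (mul_mem (ofNat_mem F 4) (pow_mem h 3)) (mul_mem hF.g₂_mem h)) hF.g₃_mem

lemma zdef_mem_aux {u v : ℂ} (hu : u ∉ L.lattice) (hv : v ∉ L.lattice) (huv : u + v ∉ L.lattice)
    (hPu : ℘[L] u ∈ F) (hPv : ℘[L] v ∈ F) : zdef L u v ∈ F := by
  have h2 : (2 : ℂ) ∈ F := ofNat_mem F 2
  by_cases h : ℘[L] u = ℘[L] v
  · -- Then `u ≡ v` modulo the lattice, and the duplication formula applies.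
    have hl : u - v ∈ L.lattice := (P_fibre L hu hv h).resolve_left huv
    have h2v : v + v ∉ L.lattice := by
      intro h'
      apply huv
      rw [show u + v = (u - v) + (v + v) by ring]
      exact add_mem hl h'
    have e : zdef L u v = zdef L v v := by
      have e1 := zet_add L hl hv
      have e2 := zet_add L hl h2v
      rw [show v + (u - v) = u by ring] at e1
      rw [show v + v + (u - v) = u + v by ring] at e2
      rw [zdef, zdef, e1, e2]
      ring
    have hne := derivP_ne_zero L hv h2v
    have h3 : zdef L v v = (6 * ℘[L] v ^ 2 - L.g₂ / 2) / (2 * ℘'[L] v) := by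
      rw [← zdef_dup L hv h2v]
      field_simp
    rw [e, h3]
    exact div_mem (sub_mem (mul_mem (ofNat_mem F 6) (pow_mem hPv 2)) (div_mem hF.g₂_mem h2))
      (mul_mem h2 (hF.derivP_mem hv hPv))
  · have hne : ℘[L] u - ℘[L] v ≠ 0 := sub_ne_zero.mpr h
    have h3 : zdef L u v = (℘'[L] u - ℘'[L] v) / (2 * (℘[L] u - ℘[L] v)) := by
      rw [← zdef_mul L hu hv huv]
      field_simp
    rw [h3]
    exact div_mem (sub_mem (hF.derivP_mem hu hPu) (hF.derivP_mem hv hPv))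
      (mul_mem h2 (sub_mem hPu hPv))

lemma P_add_mem {u v : ℂ} (hPu : ℘[L] u ∈ F) (hPv : ℘[L] v ∈ F) : ℘[L] (u + v) ∈ F := by
  by_cases hu : u ∈ L.lattice
  · rwa [add_comm, wP_add L hu]
  by_cases hv : v ∈ L.lattice
  · rwa [wP_add L hv]
  by_cases huv : u + v ∈ L.lattice
  · rw [weierstrassP_lat L huv]
    exact zero_mem F
  have h := zdef_sq L hu hv huv
  rw [show ℘[L] (u + v) = zdef L u v ^ 2 - ℘[L] u - ℘[L] v by rw [h]; ring]
  exact sub_mem (sub_mem (pow_mem (hF.zdef_mem_aux hu hv huv hPu hPv) 2) hPu) hPv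

lemma zdef_mem {u v : ℂ} (hPu : ℘[L] u ∈ F) (hPv : ℘[L] v ∈ F) : zdef L u v ∈ F := by
  have key {u v : ℂ} (hu : u ∈ L.lattice) : zdef L u v ∈ F := by
    by_cases hv : v ∈ L.lattice
    · rw [zdef, zet_lat L hu, zet_lat L hv, zet_lat L (add_mem hu hv)]
      simp
    · rw [zdef, zet_lat L hu, add_comm, zet_add L hu hv]
      simpa using hF.qper_mem hu
  by_cases hu : u ∈ L.lattice
  · exact key hu
  by_cases hv : v ∈ L.lattice
  · rw [zdef_comm]
    exact key hv
  by_cases huv : u + v ∈ L.lattice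
  · have h1 := zet_add L huv (z := -v) (by simpa using hv)
    rw [show -v + (u + v) = u by ring, zet_neg] at h1
    rw [zdef, zet_lat L huv, h1]
    simpa using hF.qper_mem huv
  · exact hF.zdef_mem_aux hu hv huv hPu hPv

end GoodField

/-! ### Division polynomials -/

lemma P_add_sub (L : PeriodPair) {u v : ℂ} (hu : u ∉ L.lattice) (hv : v ∉ L.lattice)
    (huv : u + v ∉ L.lattice) (huv' : u - v ∉ L.lattice) :
    2 * (℘[L] u - ℘[L] v) ^ 2 * (℘[L] (u + v) + ℘[L] (u - v) + 2 * ℘[L] u + 2 * ℘[L] v) =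
      ℘'[L] u ^ 2 + ℘'[L] v ^ 2 := by
  have hv' : -v ∉ L.lattice := by simpa using hv
  rw [sub_eq_add_neg] at huv'
  have e1 := zdef_mul L hu hv huv
  have e2 := zdef_mul L hu hv' huv'
  have e3 := zdef_sq L hu hv huv
  have e4 := zdef_sq L hu hv' huv'
  rw [L.weierstrassP_neg, ← sub_eq_add_neg] at e4
  rw [L.weierstrassP_neg, L.derivWeierstrassP_neg] at e2
  have e5 := congrArg (· ^ 2) e1
  have e6 := congrArg (· ^ 2) e2
  linear_combination (e5 + e6) / 2 - 2 * (℘[L] u - ℘[L] v) ^ 2 * (e3 + e4)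

lemma exists_genPt (L : PeriodPair) {S : Set ℂ} (hS : S.Countable) : ∃ z ∈ genPts L, z ∉ S :=
  (dense_genPts_diff L hS).nonempty

lemma countable_aeval_root (L : PeriodPair) {F : Subfield ℂ} {Q : Polynomial F} (hQ : Q ≠ 0) :
    {z | z ∉ L.lattice ∧ Polynomial.aeval (℘[L] z) Q = 0}.Countable := by
  have h := countable_genPts_root L (Q := Q.map (algebraMap F ℂ))
    ((Polynomial.map_ne_zero_iff (algebraMap F ℂ).injective).mpr hQ)
  simpa only [Polynomial.eval_map_algebraMap] using h

lemma exists_genPt_aeval (L : PeriodPair) {F : Subfield ℂ} {Q : Polynomial F} (hQ : Q ≠ 0) :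
    ∃ z ∈ genPts L, Polynomial.aeval (℘[L] z) Q ≠ 0 := by
  obtain ⟨z, hz, h⟩ := exists_genPt L (countable_aeval_root L hQ)
  exact ⟨z, hz, fun h' ↦ h ⟨genPts_notMem L hz, h'⟩⟩

open Polynomial in
/-- `℘(mz)` is a rational function `A/B` of `℘(z)` with coefficients in any field containing the
invariants. The relation is recorded at generic points only. -/
def HasDivPoly (L : PeriodPair) (F : Subfield ℂ) (m : ℕ) : Prop :=
  ∃ A B : Polynomial F, B ≠ 0 ∧
    ∀ z ∈ genPts L, aeval (℘[L] z) B * ℘[L] (m * z) = aeval (℘[L] z) A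

lemma genPts_nat (L : PeriodPair) {z : ℂ} (hz : z ∈ genPts L) {m : ℕ} (hm : m ≠ 0) :
    (m : ℂ) * z ∉ L.lattice := by
  simpa using hz m (by exact_mod_cast hm)

lemma P_mul_ne (L : PeriodPair) {z : ℂ} (hz : z ∈ genPts L) {m : ℕ} (hm : 2 ≤ m) :
    ℘[L] (m * z) ≠ ℘[L] z := by
  intro h
  rcases P_fibre L (genPts_nat L hz (by omega)) (genPts_notMem L hz) h with h | h
  · refine hz (m + 1) (by omega) ?_
    push_cast
    rwa [add_mul, one_mul]
  · refine hz (m - 1) (by omega) ?_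
    push_cast
    rwa [sub_mul, one_mul]

open Polynomial in
lemma hasDivPoly_succ (L : PeriodPair) {F : Subfield ℂ} (h2 : L.g₂ ∈ F) (h3 : L.g₃ ∈ F)
    {m : ℕ} (hm : 1 ≤ m) (h : HasDivPoly L F m) (h' : HasDivPoly L F (m + 1)) :
    HasDivPoly L F (m + 2) := by
  obtain ⟨c, d, hd, hcd⟩ := h
  obtain ⟨a, b, hb, hab⟩ := h'
  set G2 : F := ⟨L.g₂, h2⟩
  set G3 : F := ⟨L.g₃, h3⟩
  have hG2 : algebraMap F ℂ G2 = L.g₂ := rfl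
  have hG3 : algebraMap F ℂ G3 = L.g₃ := rfl
  have hne : a - X * b ≠ 0 := by
    intro h0
    obtain ⟨z, hz, hbz⟩ := exists_genPt_aeval L hb
    have h1 := congrArg (aeval (℘[L] z)) h0
    rw [map_sub, map_mul, aeval_X, map_zero, ← hab z hz] at h1
    refine P_mul_ne L hz (m := m + 1) (by omega) (mul_left_cancel₀ hbz ?_)
    linear_combination h1
  refine ⟨(4 * a ^ 3 - C G2 * a * b ^ 2 - C G3 * b ^ 3 + (4 * X ^ 3 - C G2 * X - C G3) * b ^ 3) * d
    - 2 * b * (a - X * b) ^ 2 * c - 4 * a * (a - X * b) ^ 2 * d - 4 * X * b * (a - X * b) ^ 2 * d,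
    2 * b * (a - X * b) ^ 2 * d, ?_, fun z hz ↦ ?_⟩
  · exact mul_ne_zero (mul_ne_zero (mul_ne_zero two_ne_zero hb) (pow_ne_zero 2 hne)) hd
  have hz1 := genPts_notMem L hz
  have hu := genPts_nat L hz (m := m + 1) (by omega)
  have e1 : ((m + 1 : ℕ) : ℂ) * z + z = (m + 2 : ℕ) * z := by push_cast; ring
  have e2 : ((m + 1 : ℕ) : ℂ) * z - z = m * z := by push_cast; ring
  have key := P_add_sub L hu hz1 (by rw [e1]; exact genPts_nat L hz (by omega))
    (by rw [e2]; exact genPts_nat L hz (by omega))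
  rw [e1, e2, L.derivWeierstrassP_sq _ hu, L.derivWeierstrassP_sq _ hz1] at key
  simp only [map_sub, map_add, map_mul, map_pow, aeval_X, aeval_C, hG2, hG3, map_ofNat,
    ← hab z hz, ← hcd z hz]
  linear_combination (aeval (℘[L] z) b) ^ 3 * (aeval (℘[L] z) d) * key

open Polynomial in
lemma hasDivPoly (L : PeriodPair) {F : Subfield ℂ} (h2 : L.g₂ ∈ F) (h3 : L.g₃ ∈ F) (m : ℕ) :
    HasDivPoly L F (m + 1) ∧ HasDivPoly L F (m + 2) := by
  induction m with
  | succ m ih => exact ⟨ih.2, hasDivPoly_succ L h2 h3 (by omega) ih.1 ih.2⟩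
  | zero =>
    refine ⟨⟨X, 1, one_ne_zero, fun z _ ↦ by simp⟩, ?_⟩
    set G2 : F := ⟨L.g₂, h2⟩
    set G3 : F := ⟨L.g₃, h3⟩
    have hG2 : algebraMap F ℂ G2 = L.g₂ := rfl
    have hG3 : algebraMap F ℂ G3 = L.g₃ := rfl
    have hB : ∀ z ∈ genPts L,
        aeval (℘[L] z) (4 * (4 * X ^ 3 - C G2 * X - C G3)) = 4 * ℘'[L] z ^ 2 := by
      intro z hz
      simp only [map_sub, map_mul, map_pow, aeval_X, aeval_C, hG2, hG3, map_ofNat,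
        L.derivWeierstrassP_sq z (genPts_notMem L hz)]
    have h2z : ∀ z ∈ genPts L, z + z ∉ L.lattice := by
      intro z hz
      simpa [two_mul] using genPts_nat L hz (m := 2) (by omega)
    refine ⟨(6 * X ^ 2 - C (G2 / 2)) ^ 2 - 2 * X * (4 * (4 * X ^ 3 - C G2 * X - C G3)),
      4 * (4 * X ^ 3 - C G2 * X - C G3), ?_, fun z hz ↦ ?_⟩
    · intro h0
      obtain ⟨z, hz, -⟩ := exists_genPt L Set.countable_empty
      have := hB z hz
      rw [h0, map_zero] at this
      simpa [derivP_ne_zero L (genPts_notMem L hz) (h2z z hz)] using this.symm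
    · have hz1 := genPts_notMem L hz
      have e1 := zdef_sq L hz1 hz1 (h2z z hz)
      have e2 := congrArg (· ^ 2) (zdef_dup L hz1 (h2z z hz))
      rw [← two_mul] at e1
      rw [hB z hz, map_sub, map_mul _ (2 * X), hB z hz]
      simp only [map_sub, map_mul, map_pow, aeval_X, aeval_C, hG2, map_ofNat, map_div₀]
      push_cast
      linear_combination e2 - 4 * ℘'[L] z ^ 2 * e1

open Polynomial in
/-- The division polynomial relation holds wherever both sides make sense. -/
lemma exists_divPoly (L : PeriodPair) {F : Subfield ℂ} (h2 : L.g₂ ∈ F) (h3 : L.g₃ ∈ F) {m : ℕ}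
    (hm : m ≠ 0) : ∃ A B : Polynomial F, B ≠ 0 ∧
      ∀ z, z ∉ L.lattice → (m : ℂ) * z ∉ L.lattice →
        aeval (℘[L] z) B * ℘[L] (m * z) = aeval (℘[L] z) A := by
  obtain ⟨k, rfl⟩ := Nat.exists_eq_succ_of_ne_zero hm
  obtain ⟨A, B, hB, h⟩ := (hasDivPoly L h2 h3 k).1
  refine ⟨A, B, hB, fun z hz hmz ↦ ?_⟩
  rw [Nat.succ_eq_add_one] at *
  have hPc : ContinuousAt ℘[L] z := (analyticAt_P L hz).continuousAt
  have hPm : ContinuousAt (fun z ↦ ℘[L] ((k + 1 : ℕ) * z)) z :=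
    ContinuousAt.comp (g := ℘[L]) (analyticAt_P L hmz).continuousAt (by fun_prop)
  have hAc : ContinuousAt (fun z ↦ aeval (℘[L] z) A) z :=
    ContinuousAt.comp (g := fun x ↦ aeval x A) (Polynomial.continuous_aeval A).continuousAt hPc
  have hBc : ContinuousAt (fun z ↦ aeval (℘[L] z) B) z :=
    ContinuousAt.comp (g := fun x ↦ aeval x B) (Polynomial.continuous_aeval B).continuousAt hPc
  have hd : Dense (genPts L) := by
    simpa using dense_genPts_diff L Set.countable_empty
  have : (𝓝[genPts L] z).NeBot := mem_closure_iff_nhdsWithin_neBot.mp (hd z)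
  have t1 := (hBc.mul hPm).tendsto.mono_left (nhdsWithin_le_nhds (s := genPts L))
  have t2 := hAc.tendsto.mono_left (nhdsWithin_le_nhds (s := genPts L))
  refine tendsto_nhds_unique_of_eventuallyEq t1 t2 ?_
  filter_upwards [self_mem_nhdsWithin] with w hw using h w hw

namespace GoodField

variable {L : PeriodPair} {F : Subfield ℂ} (hF : GoodField L F)
include hF

open Polynomial in
lemma P_mem_of_mul {m : ℕ} (hm : m ≠ 0) {x : ℂ} (hx : ℘[L] (m * x) ∈ F) : ℘[L] x ∈ F := by
  by_cases hxL : x ∈ L.lattice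
  · rw [weierstrassP_lat L hxL]
    exact zero_mem F
  by_cases hmx : (m : ℂ) * x ∈ L.lattice
  · -- Here `℘(mx)` carries no information, but `℘((m+1)x) = ℘(x)`.
    obtain ⟨A, B, hB, h⟩ := exists_divPoly L hF.g₂_mem hF.g₃_mem (m := m + 1) (by omega)
    have e : ((m + 1 : ℕ) : ℂ) * x = x + m * x := by push_cast; ring
    have hx' := h x hxL (by rw [e]; exact add_notMem L hmx hxL)
    rw [e, wP_add L hmx] at hx'
    refine hF.mem_of_root (Q := A - X * B) ?_ ?_
    · intro h0
      obtain ⟨z, hz, hBz⟩ := exists_genPt_aeval L hB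
      have h1 := congrArg (aeval (℘[L] z)) h0
      rw [map_sub, map_mul, aeval_X, map_zero,
        ← h z (genPts_notMem L hz) (genPts_nat L hz (by omega))] at h1
      refine P_mul_ne L hz (m := m + 1) (by omega) (mul_left_cancel₀ hBz ?_)
      linear_combination h1
    · rw [map_sub, map_mul, aeval_X, ← hx']
      ring
  · obtain ⟨A, B, hB, h⟩ := exists_divPoly L hF.g₂_mem hF.g₃_mem hm
    refine hF.mem_of_root (Q := A - C ⟨_, hx⟩ * B) ?_ ?_
    · intro h0
      have hm' : (m : ℂ) ≠ 0 := Nat.cast_ne_zero.mpr hm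
      obtain ⟨z, hz, hzS⟩ := exists_genPt L ((countable_aeval_root L hB).union
        ((P_fibre_countable L (℘[L] (m * x))).preimage (mul_right_injective₀ hm')))
      have hz1 := genPts_notMem L hz
      have hz2 := genPts_nat L hz hm
      simp only [Set.mem_union, Set.mem_preimage, Set.mem_ofPred_eq, hz1, hz2, not_or,
        not_false_eq_true, true_and] at hzS
      have h1 := congrArg (aeval (℘[L] z)) h0
      rw [map_sub, map_mul, aeval_C, map_zero, ← h z hz1 hz2] at h1
      refine hzS.2 (mul_left_cancel₀ hzS.1 ?_)
      change _ - ℘[L] (m * x) * _ = 0 at h1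
      linear_combination h1
    · rw [map_sub, map_mul, aeval_C, ← h x hxL hmx]
      change _ - ℘[L] (m * x) * _ = 0
      ring

/-- The additive group of all `z ∈ F` at which `℘` and `ζ` take values in `F`. -/
def pts : AddSubgroup ℂ where
  carrier := {z | z ∈ F ∧ ℘[L] z ∈ F ∧ zet L z ∈ F}
  zero_mem' := ⟨zero_mem F, by rw [weierstrassP_lat L (zero_mem _)]; exact zero_mem F,
    by rw [zet_lat L (zero_mem _)]; exact zero_mem F⟩
  add_mem' := by
    rintro u v ⟨hu1, hu2, hu3⟩ ⟨hv1, hv2, hv3⟩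
    refine ⟨add_mem hu1 hv1, hF.P_add_mem hu2 hv2, ?_⟩
    rw [show zet L (u + v) = zdef L u v + zet L u + zet L v by rw [zdef]; ring]
    exact add_mem (add_mem (hF.zdef_mem hu2 hv2) hu3) hv3
  neg_mem' := by
    rintro u ⟨hu1, hu2, hu3⟩
    refine ⟨neg_mem hu1, ?_, ?_⟩
    · rwa [L.weierstrassP_neg]
    · rw [zet_neg]
      exact neg_mem hu3

lemma mem_pts {z : ℂ} : z ∈ hF.pts ↔ z ∈ F ∧ ℘[L] z ∈ F ∧ zet L z ∈ F := Iff.rfl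

lemma lattice_mem_pts {w : ℂ} (hw : w ∈ L.lattice) : w ∈ hF.pts := by
  refine ⟨hF.lattice_mem hw, ?_, ?_⟩
  · rw [weierstrassP_lat L hw]
    exact zero_mem F
  · rw [zet_lat L hw]
    exact zero_mem F

lemma P_mul_mem {z : ℂ} (hz : ℘[L] z ∈ F) (m : ℕ) :
    ℘[L] (m * z) ∈ F ∧ zet L (m * z) - m * zet L z ∈ F := by
  induction m with
  | zero =>
    simp [weierstrassP_lat L (zero_mem _), zet_lat L (zero_mem _)]
  | succ m ih =>
    have e : ((m + 1 : ℕ) : ℂ) * z = m * z + z := by push_cast; ring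
    rw [e]
    refine ⟨hF.P_add_mem ih.1 hz, ?_⟩
    have := add_mem ih.2 (hF.zdef_mem ih.1 hz)
    convert! this using 1
    rw [zdef]
    push_cast
    ring

lemma mem_pts_of_nat_mul {m : ℕ} (hm : m ≠ 0) {x : ℂ} (hx : m * x ∈ hF.pts) : x ∈ hF.pts := by
  obtain ⟨h1, h2, h3⟩ := hx
  have hm' : (m : ℂ) ≠ 0 := Nat.cast_ne_zero.mpr hm
  have hP := hF.P_mem_of_mul hm h2
  refine ⟨?_, hP, ?_⟩
  · rw [show x = m * x / m by field_simp]
    exact div_mem h1 (natCast_mem F m)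
  · rw [show zet L x = (zet L (m * x) - (zet L (m * x) - m * zet L x)) / m by field_simp; ring]
    exact div_mem (sub_mem h3 (hF.P_mul_mem hP m).2) (natCast_mem F m)

lemma mem_pts_of_int_mul {m : ℤ} (hm : m ≠ 0) {x : ℂ} (hx : m * x ∈ hF.pts) : x ∈ hF.pts := by
  refine hF.mem_pts_of_nat_mul (m := m.natAbs) (by omega) ?_
  rw [Nat.cast_natAbs]
  rcases abs_choice m with h | h
  · rwa [h]
  · rw [h]
    simpa using hx

lemma torsion_mem_pts (a b : ℚ) : (a : ℂ) * L.ω₁ + b * L.ω₂ ∈ hF.pts := by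
  refine hF.mem_pts_of_int_mul (m := a.den * b.den) (by positivity) (hF.lattice_mem_pts ?_)
  refine PeriodPair.mem_lattice.mpr ⟨a.num * b.den, b.num * a.den, ?_⟩
  have ha : (a : ℂ) = a.num / a.den := Rat.cast_def a
  have hb : (b : ℂ) = b.num / b.den := Rat.cast_def b
  have ha' : (a.den : ℂ) ≠ 0 := Nat.cast_ne_zero.mpr a.den_ne_zero
  have hb' : (b.den : ℂ) ≠ 0 := Nat.cast_ne_zero.mpr b.den_ne_zero
  rw [ha, hb]
  push_cast
  field_simp

end GoodField


/-! ### Complex multiplication -/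

lemma ω₁_ne_zero' (L : PeriodPair) : L.ω₁ ≠ 0 := fun h ↦
  L.ω₁_div_two_notMem_lattice (by rw [h, zero_div]; exact zero_mem _)

lemma int_lin_indep (L : PeriodPair) {m n : ℤ} (h : (m : ℂ) * L.ω₁ + n * L.ω₂ = 0) :
    m = 0 ∧ n = 0 := by
  have := LinearIndependent.pair_iff.mp L.indep m n (by simpa using h)
  exact_mod_cast this

/-- The lattice `α⁻¹Ω` is contained in `n⁻¹Ω`. -/
lemma exists_nat_mul_mem (L : PeriodPair) {α : ℂ} (hα : α ≠ 0)
    (h : ∀ w ∈ L.lattice, α * w ∈ L.lattice) :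
    ∃ n : ℕ, n ≠ 0 ∧ ∀ x, α * x ∈ L.lattice → n * x ∈ L.lattice := by
  obtain ⟨a, b, h1⟩ := PeriodPair.mem_lattice.mp (h _ L.ω₁_mem_lattice)
  obtain ⟨c, d, h2⟩ := PeriodPair.mem_lattice.mp (h _ L.ω₂_mem_lattice)
  have hN : a * d - b * c ≠ 0 := by
    intro hN
    have hN' : (a : ℂ) * d - b * c = 0 := by exact_mod_cast hN
    have e1 : ((d : ℤ) : ℂ) * L.ω₁ + ((-b : ℤ) : ℂ) * L.ω₂ = 0 := by
      apply mul_left_cancel₀ hα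
      push_cast
      linear_combination L.ω₁ * hN' - d * h1 + b * h2
    have e2 : ((-c : ℤ) : ℂ) * L.ω₁ + ((a : ℤ) : ℂ) * L.ω₂ = 0 := by
      apply mul_left_cancel₀ hα
      push_cast
      linear_combination L.ω₂ * hN' + c * h1 - a * h2
    have hb : b = 0 := by simpa using (int_lin_indep L e1).2
    have ha : a = 0 := (int_lin_indep L e2).2
    rw [ha, hb] at h1
    have : α * L.ω₁ = 0 := by rw [← h1]; simp
    exact mul_ne_zero hα (ω₁_ne_zero' L) this
  refine ⟨(a * d - b * c).natAbs, by omega, fun x hx ↦ ?_⟩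
  have key : ((a * d - b * c : ℤ) : ℂ) * x ∈ L.lattice := by
    obtain ⟨p, q, h3⟩ := PeriodPair.mem_lattice.mp hx
    refine PeriodPair.mem_lattice.mpr ⟨p * d - q * c, q * a - p * b, ?_⟩
    apply mul_left_cancel₀ hα
    push_cast
    linear_combination (a * d - b * c : ℂ) * h3 - (p * d - q * c : ℂ) * h1 - (q * a - p * b : ℂ) * h2
  rw [Nat.cast_natAbs]
  rcases abs_choice (a * d - b * c) with h | h
  · rwa [h]
  · rw [h, Int.cast_neg, neg_mul]
    exact neg_mem key

lemma dvd_of_div_mem (L : PeriodPair) {n : ℕ} (hn : n ≠ 0) {i j : ℤ}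
    (h : ((i : ℂ) * L.ω₁ + j * L.ω₂) / n ∈ L.lattice) : (n : ℤ) ∣ i ∧ (n : ℤ) ∣ j := by
  obtain ⟨a, b, h⟩ := PeriodPair.mem_lattice.mp h
  have hn' : (n : ℂ) ≠ 0 := Nat.cast_ne_zero.mpr hn
  rw [eq_div_iff hn'] at h
  have := int_lin_indep L (m := i - n * a) (n := j - n * b) (by
    push_cast
    linear_combination -h)
  exact ⟨⟨a, by linarith [this.1]⟩, ⟨b, by linarith [this.2]⟩⟩

/-- A finite system of representatives of `α⁻¹Ω` modulo `Ω`. -/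
lemma exists_reps (L : PeriodPair) {α : ℂ} (hα : α ≠ 0)
    (h : ∀ w ∈ L.lattice, α * w ∈ L.lattice) :
    ∃ T : Finset ℂ, (∀ t ∈ T, α * t ∈ L.lattice) ∧
      ∀ x, α * x ∈ L.lattice → ∃ t ∈ T, x + t ∈ L.lattice ∧
        ∀ t' ∈ T, x + t' ∈ L.lattice → t' = t := by
  classical
  obtain ⟨n, hn, hmul⟩ := exists_nat_mul_mem L hα h
  have hn' : (n : ℂ) ≠ 0 := Nat.cast_ne_zero.mpr hn
  have hn0 : (0 : ℤ) < n := by positivity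
  set g : ℤ × ℤ → ℂ := fun q ↦ ((q.1 : ℂ) * L.ω₁ + q.2 * L.ω₂) / n with hg
  refine ⟨((Finset.Ico (0 : ℤ) n ×ˢ Finset.Ico (0 : ℤ) n).image g).filter
    (fun t ↦ α * t ∈ L.lattice), fun t ht ↦ (Finset.mem_filter.mp ht).2, fun x hx ↦ ?_⟩
  obtain ⟨p, q, hpq⟩ := PeriodPair.mem_lattice.mp (hmul x hx)
  have hxt : x + g ((-p) % n, (-q) % n) ∈ L.lattice := by
    refine PeriodPair.mem_lattice.mpr ⟨-((-p) / n), -((-q) / n), ?_⟩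
    have e1 : (((-p) % n : ℤ) : ℂ) = -p - n * ((-p) / n : ℤ) := by
      exact_mod_cast Int.emod_def (-p) n
    have e2 : (((-q) % n : ℤ) : ℂ) = -q - n * ((-q) / n : ℤ) := by
      exact_mod_cast Int.emod_def (-q) n
    apply mul_left_cancel₀ hn'
    simp only [hg, e1, e2, mul_add, mul_div_cancel₀ _ hn', ← hpq]
    push_cast
    ring
  have hαt : ∀ t, x + t ∈ L.lattice → α * t ∈ L.lattice := by
    intro t ht
    have := sub_mem (h _ ht) hx
    convert! this using 1
    ring
  refine ⟨_, Finset.mem_filter.mpr ⟨Finset.mem_image_of_mem g (a := ((-p) % n, (-q) % n)) ?_,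
    hαt _ hxt⟩, hxt, ?_⟩
  · simp [Int.emod_nonneg _ hn0.ne', Int.emod_lt_of_pos _ hn0]
  · intro t' ht' hxt'
    obtain ⟨⟨i, j⟩, hij, rfl⟩ := Finset.mem_image.mp (Finset.mem_filter.mp ht').1
    simp only [Finset.mem_product, Finset.mem_Ico] at hij
    have hd : ((i - (-p) % n : ℤ) * L.ω₁ + (j - (-q) % n : ℤ) * L.ω₂) / n ∈ L.lattice := by
      have := sub_mem hxt' hxt
      convert! this using 1
      simp only [hg]
      push_cast
      ring
    obtain ⟨d1, d2⟩ := dvd_of_div_mem L hn hd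
    have b1 := Int.emod_nonneg (-p) hn0.ne'
    have b2 := Int.emod_lt_of_pos (-p) hn0
    have b3 := Int.emod_nonneg (-q) hn0.ne'
    have b4 := Int.emod_lt_of_pos (-q) hn0
    have r1 : i - (-p) % n = 0 := Int.eq_zero_of_abs_lt_dvd d1 (by rw [abs_lt]; omega)
    have r2 : j - (-q) % n = 0 := Int.eq_zero_of_abs_lt_dvd d2 (by rw [abs_lt]; omega)
    rw [show i = (-p) % n by omega, show j = (-q) % n by omega]

/-- Transformation formula of `℘` under an endomorphism `α` of the lattice: the two sides have the
same principal parts. -/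
lemma P_cm (L : PeriodPair) {α : ℂ} (hα : α ≠ 0) (h : ∀ w ∈ L.lattice, α * w ∈ L.lattice)
    {T : Finset ℂ} (hT1 : ∀ t ∈ T, α * t ∈ L.lattice)
    (hT2 : ∀ x, α * x ∈ L.lattice → ∃ t ∈ T, x + t ∈ L.lattice ∧
        ∀ t' ∈ T, x + t' ∈ L.lattice → t' = t) :
    ∃ c, ∀ z, α * z ∉ L.lattice → α ^ 2 * ℘[L] (α * z) = ∑ t ∈ T, ℘[L] (z + t) + c := by
  classical
  set f : ℂ → ℂ := fun z ↦ α ^ 2 * ℘[L] (α * z) - ∑ t ∈ T, ℘[L] (z + t) with hf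
  have hana {z : ℂ} (hz : α * z ∉ L.lattice) : AnalyticAt ℂ f z := by
    have h1 : AnalyticAt ℂ (fun z ↦ ℘[L] (α * z)) z :=
      (analyticAt_P L hz).fun_comp_of_eq (by fun_prop) rfl
    refine (analyticAt_const.fun_mul h1).fun_sub
      (Finset.analyticAt_fun_sum _ fun t ht ↦ analyticAt_add_const (analyticAt_P L fun h' ↦ hz ?_))
    have := sub_mem (h _ h') (hT1 t ht)
    convert! this using 1
    ring
  have hper (w : ℂ) (hw : w ∈ L.lattice) (z : ℂ) : f (z + w) = f z := by
    simp only [hf]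
    rw [mul_add, wP_add L (h w hw)]
    congr 1
    refine Finset.sum_congr rfl fun t _ ↦ ?_
    rw [show z + w + t = z + t + w by ring, wP_add L hw]
  have hrem : ∀ z, ∃ g, AnalyticAt ℂ g z ∧ f =ᶠ[𝓝[≠] z] g := by
    intro z
    by_cases hz : α * z ∈ L.lattice
    · obtain ⟨t₀, ht₀, hzt₀, huniq⟩ := hT2 z hz
      have hPe : AnalyticAt ℂ (L.weierstrassPExcept 0) 0 := L.analyticAt_weierstrassPExcept 0
      refine ⟨fun u ↦ α ^ 2 * L.weierstrassPExcept 0 (α * (u - z)) -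
        (L.weierstrassPExcept 0 (u - z) + ∑ t ∈ T.erase t₀, ℘[L] (u + t)),
        (analyticAt_const.fun_mul (hPe.fun_comp_of_eq (by fun_prop) (by simp))).fun_sub
          ((hPe.fun_comp_of_eq (by fun_prop) (by simp)).fun_add
          (Finset.analyticAt_fun_sum _ fun t ht ↦ analyticAt_add_const (analyticAt_P L fun h' ↦ ?_))),
        ?_⟩
      · rw [Finset.mem_erase] at ht
        exact ht.1 (huniq t ht.2 h')
      · filter_upwards [self_mem_nhdsWithin] with u hu
        have huz : u - z ≠ 0 := sub_ne_zero.mpr hu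
        simp only [hf]
        rw [← Finset.add_sum_erase T _ ht₀,
          show α * u = α * (u - z) + α * z by ring, wP_add L hz,
          show u + t₀ = u - z + (z + t₀) by ring, wP_add L hzt₀, weierstrassP_eq L (α * (u - z)),
          weierstrassP_eq L (u - z)]
        field_simp
        ring
    · exact ⟨f, hana hz, .rfl⟩
  obtain ⟨c, hc⟩ := elliptic_liouville L f hrem fun w hw z ↦ .of_forall fun u ↦ hper w hw u
  refine ⟨c, fun z hz ↦ ?_⟩
  have := eq_of_eventually_punctured (hana hz).continuousAt (hc z)
  simp only [hf] at this
  linear_combination this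

namespace GoodField

variable {L : PeriodPair} {F : Subfield ℂ} (hF : GoodField L F)
include hF

lemma mul_mem_pts {α : ℂ} (hα : α ≠ 0) (h : ∀ w ∈ L.lattice, α * w ∈ L.lattice) {z : ℂ}
    (hz : z ∈ hF.pts) : α * z ∈ hF.pts := by
  obtain ⟨n, hn, hmul⟩ := exists_nat_mul_mem L hα h
  obtain ⟨T, hT1, hT2⟩ := exists_reps L hα h
  obtain ⟨c, hc⟩ := P_cm L hα h hT1 hT2
  have hn' : (n : ℂ) ≠ 0 := Nat.cast_ne_zero.mpr hn
  have hαF : α ∈ F := by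
    rw [show α = α * L.ω₁ / L.ω₁ by rw [mul_div_cancel_right₀ _ (ω₁_ne_zero' L)]]
    exact div_mem (hF.lattice_mem (h _ L.ω₁_mem_lattice)) hF.ω₁_mem
  have hTp : ∀ t ∈ T, t ∈ hF.pts := fun t ht ↦
    hF.mem_pts_of_nat_mul hn (hF.lattice_mem_pts (hmul t (hT1 t ht)))
  -- A torsion point which is not a pole, where the constants of integration can be computed.
  obtain ⟨z₀, hz₀, hαz₀, hz₀L⟩ : ∃ z₀, z₀ ∈ hF.pts ∧ α * z₀ ∈ hF.pts ∧ α * z₀ ∉ L.lattice := by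
    refine ⟨L.ω₁ / 2 / n, ?_, ?_, fun h' ↦ ?_⟩
    · refine hF.mem_pts_of_nat_mul (m := 2 * n) (by omega) (hF.lattice_mem_pts ?_)
      convert! L.ω₁_mem_lattice using 1
      push_cast
      field_simp
    · refine hF.mem_pts_of_nat_mul (m := 2 * n) (by omega) (hF.lattice_mem_pts ?_)
      convert! h _ L.ω₁_mem_lattice using 1
      push_cast
      field_simp
    · have := hmul _ h'
      rw [mul_div_cancel₀ _ hn'] at this
      exact L.ω₁_div_two_notMem_lattice this
  have hsumP : ∀ z ∈ hF.pts, ∑ t ∈ T, ℘[L] (z + t) ∈ F := fun z hz ↦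
    sum_mem fun t ht ↦ (add_mem hz (hTp t ht)).2.1
  have hsumZ : ∀ z ∈ hF.pts, ∑ t ∈ T, zet L (z + t) ∈ F := fun z hz ↦
    sum_mem fun t ht ↦ (add_mem hz (hTp t ht)).2.2
  have hcF : c ∈ F := by
    rw [show c = α ^ 2 * ℘[L] (α * z₀) - ∑ t ∈ T, ℘[L] (z₀ + t) by rw [hc z₀ hz₀L]; ring]
    exact sub_mem (mul_mem (pow_mem hαF 2) hαz₀.2.1) (hsumP _ hz₀)
  by_cases hzL : α * z ∈ L.lattice
  · exact hF.lattice_mem_pts hzL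
  refine ⟨mul_mem hαF hz.1, ?_, ?_⟩
  · rw [show ℘[L] (α * z) = (∑ t ∈ T, ℘[L] (z + t) + c) / α ^ 2 by
      rw [← hc z hzL]; field_simp]
    exact div_mem (add_mem (hsumP z hz) hcF) (pow_mem hαF 2)
  -- Integrate the transformation formula of `℘`.
  set G : ℂ → ℂ := fun z ↦ α * zet L (α * z) - ∑ t ∈ T, zet L (z + t) + c * z with hG
  have hd : ∀ z ∈ {z | α * z ∈ L.lattice}ᶜ, HasDerivAt G 0 z := by
    intro z hz
    have hz' : α * z ∉ L.lattice := hz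
    have d1 : HasDerivAt (fun z ↦ zet L (α * z)) (- ℘[L] (α * z) * α) z :=
      HasDerivAt.comp (h₂ := zet L) z (hasDerivAt_zet L hz')
        (by simpa using (hasDerivAt_id' z).const_mul α)
    have d2 : HasDerivAt (fun z ↦ ∑ t ∈ T, zet L (z + t)) (∑ t ∈ T, - ℘[L] (z + t)) z := by
      refine HasDerivAt.fun_sum fun t ht ↦ (hasDerivAt_zet L fun h' ↦ hz' ?_).comp_add_const z t
      have := sub_mem (h _ h') (hT1 t ht)
      convert! this using 1
      ring
    have d3 := ((d1.const_mul α).fun_sub d2).fun_add ((hasDerivAt_id' z).const_mul c)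
    convert! d3 using 1
    rw [Finset.sum_neg_distrib]
    linear_combination hc z hz'
  have hopen : IsOpen ({z | α * z ∈ L.lattice}ᶜ) :=
    (L.isClosed_lattice.preimage (continuous_const_mul α)).isOpen_compl
  have hconn : IsPreconnected ({z | α * z ∈ L.lattice}ᶜ) :=
    (Set.Countable.isConnected_compl_of_one_lt_rank (by simp)
      ((countable_lattice L).preimage (mul_right_injective₀ hα))).2
  have hconst := hopen.is_const_of_deriv_eq_zero hconn
    (fun z hz ↦ (hd z hz).differentiableAt.differentiableWithinAt)
    (fun z hz ↦ (hd z hz).deriv) (show z ∈ {z | α * z ∈ L.lattice}ᶜ from hzL)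
    (show z₀ ∈ {z | α * z ∈ L.lattice}ᶜ from hz₀L)
  have hG₀ : G z₀ ∈ F := add_mem (sub_mem (mul_mem hαF hαz₀.2.2) (hsumZ _ hz₀))
    (mul_mem hcF hz₀.1)
  rw [show zet L (α * z) = (G z + ∑ t ∈ T, zet L (z + t) - c * z) / α by
    simp only [hG]; field_simp; ring, hconst]
  exact div_mem (sub_mem (add_mem hG₀ (hsumZ z hz)) (mul_mem hcF hz.1)) hαF

lemma endQ_mul_mem_pts {α : ℂ} (hα : α ∈ endQ L.ω₁ L.ω₂) {z : ℂ} (hz : z ∈ hF.pts) :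
    α * z ∈ hF.pts := by
  obtain ⟨m, hm, h⟩ := hα
  by_cases hα0 : α = 0
  · rw [hα0, zero_mul]
    exact zero_mem _
  refine hF.mem_pts_of_int_mul hm ?_
  rw [← mul_assoc]
  refine hF.mul_mem_pts (mul_ne_zero (Int.cast_ne_zero.mpr hm) hα0) (fun w hw ↦ ?_) hz
  exact (mem_latticePts_iff L).mp (h w ((mem_latticePts_iff L).mpr hw))

end GoodField


/-! ### The Legendre relation -/

lemma hasDerivAt_sigma (L : PeriodPair) {z : ℂ} (hz : z ∉ L.lattice) :
    HasDerivAt (wSigma L.ω₁ L.ω₂) (zet L z * wSigma L.ω₁ L.ω₂ z) z ∧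
      wSigma L.ω₁ L.ω₂ z ≠ 0 := by
  have hne : wSigma L.ω₁ L.ω₂ z ≠ 0 := by
    rw [wSigma_eq]
    exact mul_ne_zero (ne_zero_of_notMem L hz) (sigmaReg_ne_zero L (notMem_sdiff L hz))
  have hd : DifferentiableAt ℂ (wSigma L.ω₁ L.ω₂) z := by
    rw [wSigma_eq]
    exact differentiableAt_fun_id.fun_mul (differentiable_sigmaReg L z)
  refine ⟨?_, hne⟩
  convert! hd.hasDerivAt using 1
  rw [zet, wZeta, div_mul_cancel₀ _ hne]

/-- The transformation law of `σ` under translation by a period. -/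
lemma exists_sigma_add (L : PeriodPair) {w : ℂ} (hw : w ∈ L.lattice) :
    ∃ C : ℂ, C ≠ 0 ∧ ∀ z, z ∉ L.lattice →
      wSigma L.ω₁ L.ω₂ (z + w) = C * exp (qper L w * z) * wSigma L.ω₁ L.ω₂ z := by
  set q : ℂ → ℂ := fun z ↦
    wSigma L.ω₁ L.ω₂ (z + w) * exp (-(qper L w * z)) / wSigma L.ω₁ L.ω₂ z with hq
  have hd : ∀ z ∈ (L.lattice : Set ℂ)ᶜ, HasDerivAt q 0 z := by
    intro z hz
    obtain ⟨h1, hne⟩ := hasDerivAt_sigma L hz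
    have h2 := (hasDerivAt_sigma L (add_notMem L hw hz)).1.comp_add_const z w
    have h3 : HasDerivAt (fun z ↦ exp (-(qper L w * z))) _ z :=
      (((hasDerivAt_id' z).const_mul (qper L w)).fun_neg).cexp
    have h4 := (h2.fun_mul h3).fun_div h1 hne
    convert! h4 using 1
    rw [zet_add L hw hz]
    field_simp
    ring
  have h0 := third_notMem L
  refine ⟨q ((L.ω₁ + L.ω₂) / 3), ?_, fun z hz ↦ ?_⟩
  · exact div_ne_zero (mul_ne_zero (hasDerivAt_sigma L (add_notMem L hw h0)).2 (exp_ne_zero _))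
      (hasDerivAt_sigma L h0).2
  have := (isOpen_compl_lattice L).is_const_of_deriv_eq_zero (isPreconnected_compl_lattice L)
    (fun z hz ↦ (hd z hz).differentiableAt.differentiableWithinAt)
    (fun z hz ↦ (hd z hz).deriv) (show z ∈ (L.lattice : Set ℂ)ᶜ from hz)
    (show (L.ω₁ + L.ω₂) / 3 ∈ (L.lattice : Set ℂ)ᶜ from h0)
  rw [← this, hq]
  have hne := (hasDerivAt_sigma L hz).2
  simp only [exp_neg]
  have := exp_ne_zero (qper L w * z)
  field_simp

lemma exists_legendre (L : PeriodPair) :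
    ∃ n : ℤ, qper L L.ω₁ * L.ω₂ - qper L L.ω₂ * L.ω₁ = n * (2 * Real.pi * I) := by
  obtain ⟨C₁, hC₁, h₁⟩ := exists_sigma_add L L.ω₁_mem_lattice
  obtain ⟨C₂, hC₂, h₂⟩ := exists_sigma_add L L.ω₂_mem_lattice
  have h0 := third_notMem L
  set z := (L.ω₁ + L.ω₂) / 3
  have hne := (hasDerivAt_sigma L h0).2
  have e1 := h₁ _ (add_notMem L L.ω₂_mem_lattice h0)
  have e2 := h₂ _ (add_notMem L L.ω₁_mem_lattice h0)
  rw [h₂ z h0] at e1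
  rw [h₁ z h0, add_right_comm] at e2
  refine exp_eq_one_iff.mp ?_
  rw [e1, mul_add, mul_add, exp_add, exp_add] at e2
  have k1 := exp_ne_zero (qper L L.ω₁ * z)
  have k2 := exp_ne_zero (qper L L.ω₂ * z)
  have e3 : exp (qper L L.ω₁ * L.ω₂) = exp (qper L L.ω₂ * L.ω₁) := by
    apply mul_left_cancel₀ (mul_ne_zero (mul_ne_zero (mul_ne_zero hC₁ hC₂) (mul_ne_zero k1 k2)) hne)
    linear_combination e2
  rw [exp_sub, e3, div_self (exp_ne_zero _)]

/-- If the Legendre determinant vanished, `f = ζ(z) - cz` would be elliptic with a single simple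
pole modulo the lattice. It is odd, hence vanishes at the half periods, so `f(z) f(z + ω₁/2)` has
no poles and is constant, equal to its value `0` at `ω₂/2`; this makes `f` identically zero. -/
lemma legendre_ne_zero (L : PeriodPair) :
    qper L L.ω₁ * L.ω₂ - qper L L.ω₂ * L.ω₁ ≠ 0 := by
  intro h0
  have hω := ω₁_ne_zero' L
  set c := qper L L.ω₁ / L.ω₁ with hc
  have hper : ∀ w ∈ L.lattice, qper L w = c * w := by
    intro w hw
    obtain ⟨m, n, rfl⟩ := PeriodPair.mem_lattice.mp hw
    rw [qper_eq, hc]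
    field_simp
    linear_combination -(n : ℂ) * h0
  set f : ℂ → ℂ := fun z ↦ zet L z - c * z with hf
  have hfw : ∀ w ∈ L.lattice, ∀ z, z ∉ L.lattice → f (z + w) = f z := by
    intro w hw z hz
    simp only [hf, zet_add L hw hz, hper w hw]
    ring
  have hodd : ∀ z, f (-z) = - f z := by
    intro z
    simp only [hf, zet_neg]
    ring
  have hhalf : ∀ h, h ∉ L.lattice → h + h ∈ L.lattice → f h = 0 := by
    intro h h1 h2
    have := hfw _ h2 (-h) (by simpa using h1)
    rw [show -h + (h + h) = h by ring, hodd] at this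
    linear_combination this / 2
  have hfa : ∀ z, z ∉ L.lattice → AnalyticAt ℂ f z := fun z hz ↦
    (analyticAt_zet L hz).fun_sub (by fun_prop)
  set h := L.ω₁ / 2 with hh
  have hL : h ∉ L.lattice := L.ω₁_div_two_notMem_lattice
  have h2L : h + h ∈ L.lattice := by
    rw [hh, add_halves]
    exact L.ω₁_mem_lattice
  have hfh := hhalf h hL h2L
  have hpunct : ∀ z, ∀ᶠ u in 𝓝[≠] z, u ∉ L.lattice ∧ u + h ∉ L.lattice := fun z ↦
    (eventually_notMem_punctured L z).and
      ((tendsto_add_punctured h z).eventually (eventually_notMem_punctured L (z + h)))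
  set g : ℂ → ℂ := fun z ↦ f z * f (z + h) with hg
  have hgw : ∀ w ∈ L.lattice, ∀ z, ∀ᶠ u in 𝓝[≠] z, g (u + w) = g u := by
    intro w hw z
    filter_upwards [hpunct z] with u hu
    simp only [hg]
    rw [hfw w hw u hu.1, add_right_comm, hfw w hw _ hu.2]
  have hgh : ∀ z, ∀ᶠ u in 𝓝[≠] z, g (u + h) = g u := by
    intro z
    filter_upwards [hpunct z] with u hu
    simp only [hg]
    rw [add_assoc, hfw _ h2L u hu.1, mul_comm]
  -- Transport of the removable singularity along a translation.
  have htrans : ∀ v z, (∀ᶠ u in 𝓝[≠] z, g (u + v) = g u) →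
      (∃ k, AnalyticAt ℂ k (z + v) ∧ g =ᶠ[𝓝[≠] (z + v)] k) →
      ∃ k, AnalyticAt ℂ k z ∧ g =ᶠ[𝓝[≠] z] k := by
    rintro v z hv ⟨k, hk, hgk⟩
    refine ⟨fun u ↦ k (u + v), analyticAt_add_const hk, ?_⟩
    filter_upwards [hv, (tendsto_add_punctured v z).eventually hgk] with u h1 h2
    rw [← h1, h2]
  have hg0 : ∃ k, AnalyticAt ℂ k 0 ∧ g =ᶠ[𝓝[≠] 0] k := by
    have ha : AnalyticAt ℂ (fun u ↦ f (u + h)) 0 :=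
      analyticAt_add_const (by simpa using hfa h hL)
    refine ⟨fun u ↦ dslope (fun u ↦ f (u + h)) 0 u + (zetaReg L u - c * u) * f (u + h),
      ?_, ?_⟩
    · refine AnalyticAt.fun_add ?_ (((analyticAt_zetaReg L).fun_sub (by fun_prop)).fun_mul ha)
      obtain ⟨p, hp⟩ := ha
      exact ⟨_, hp.has_fpower_series_dslope_fslope⟩
    · filter_upwards [eventually_notMem_punctured L 0] with u hu
      have hu0 := ne_zero_of_notMem L hu
      rw [dslope_of_ne _ hu0, slope_def_field, zero_add, hfh]
      simp only [hg]
      rw [show f u = 1 / u + zetaReg L u - c * u by rw [← zet_eq L hu]]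
      field_simp
      ring
  have hgL : ∀ z ∈ L.lattice, ∃ k, AnalyticAt ℂ k z ∧ g =ᶠ[𝓝[≠] z] k := fun z hz ↦
    htrans (-z) z (hgw _ (neg_mem hz) z) (by simpa using hg0)
  obtain ⟨d, hd⟩ := elliptic_liouville L g (fun z ↦ by
    by_cases hz : z ∈ L.lattice
    · exact hgL z hz
    by_cases hz' : z + h ∈ L.lattice
    · exact htrans h z (hgh z) (hgL _ hz')
    · exact ⟨g, (hfa z hz).fun_mul (analyticAt_add_const (hfa _ hz')), by rfl⟩) hgw
  have hd0 : d = 0 := by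
    have hk : L.ω₂ / 2 ∉ L.lattice := L.ω₂_div_two_notMem_lattice
    have hkh : L.ω₂ / 2 + h ∉ L.lattice := by
      have := (mul_ω₁_add_mul_ω₂_mem_lattice (L := L) (α := 1 / 2) (β := 1 / 2)).not.mpr (by
        norm_num)
      convert! this using 2
      push_cast
      ring
    rw [← eq_of_eventually_punctured (f := g) (z := L.ω₂ / 2)
      ((hfa _ hk).fun_mul (analyticAt_add_const (hfa _ hkh))).continuousAt (hd _)]
    simp only [hg]
    rw [hhalf _ hk (by rw [add_halves]; exact L.ω₂_mem_lattice), zero_mul]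
  -- Since `u f(u) → 1` at the origin, the factor `f(u + h)` of `g(u)` vanishes there.
  have hne : ∀ᶠ u in 𝓝[≠] (0 : ℂ), 1 + u * (zetaReg L u - c * u) ≠ 0 := by
    have hcont : ContinuousAt (fun u : ℂ ↦ 1 + u * (zetaReg L u - c * u)) 0 :=
      continuousAt_const.add (continuousAt_id.mul
        ((analyticAt_zetaReg L).continuousAt.sub (by fun_prop)))
    exact (hcont.eventually_ne (by simp)).filter_mono nhdsWithin_le_nhds
  have hz : ∀ᶠ u in 𝓝[≠] (0 : ℂ), f (u + h) = 0 := by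
    filter_upwards [hne, hd 0, eventually_notMem_punctured L 0] with u h1 h2 h3
    have hu0 := ne_zero_of_notMem L h3
    rw [hd0] at h2
    refine (mul_eq_zero.mp h2).resolve_left fun h4 ↦ h1 ?_
    have : f u = 1 / u + zetaReg L u - c * u := by rw [← zet_eq L h3]
    rw [this] at h4
    field_simp at h4
    linear_combination h4
  have hz' : ∀ᶠ u in 𝓝 (0 : ℂ), f (u + h) = 0 := by
    have ha : AnalyticAt ℂ (fun u ↦ f (u + h)) 0 :=
      analyticAt_add_const (by simpa using hfa h hL)
    exact (ha.continuousAt.eventuallyEq_nhds_iff_eventuallyEq_nhdsNE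
      (continuousAt_const (y := (0 : ℂ)))).mp hz
  have hz2 : ∀ᶠ u in 𝓝 h, f u = 0 := by
    have ht : Tendsto (fun u ↦ u - h) (𝓝 h) (𝓝 0) := by
      simpa using (continuous_sub_right h).tendsto h
    filter_upwards [ht.eventually hz'] with u hu
    simpa using hu
  refine P_not_eventually_const L hL (-c) ?_
  filter_upwards [hz2.eventually_nhds, eventually_notMem L hL] with u h1 h2
  have d1 : HasDerivAt f (-℘[L] u - c) u := by
    simpa using (hasDerivAt_zet L h2).fun_sub ((hasDerivAt_id' u).const_mul c)
  have d2 : HasDerivAt f 0 u := (hasDerivAt_const u (0 : ℂ)).congr_of_eventuallyEq h1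
  linear_combination -(d1.unique d2)

/-- The additive group of all `t ∈ F` with `e^t ∈ F`. -/
def expPts (F : Subfield ℂ) : AddSubgroup ℂ where
  carrier := {t | t ∈ F ∧ exp t ∈ F}
  zero_mem' := ⟨zero_mem F, by rw [exp_zero]; exact one_mem F⟩
  add_mem' := by
    rintro u v ⟨hu, hu'⟩ ⟨hv, hv'⟩
    exact ⟨add_mem hu hv, by rw [exp_add]; exact mul_mem hu' hv'⟩
  neg_mem' := by
    rintro u ⟨hu, hu'⟩
    exact ⟨neg_mem hu, by rw [exp_neg]; exact inv_mem hu'⟩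

namespace GoodField

variable {L : PeriodPair} {F : Subfield ℂ} (hF : GoodField L F)
include hF

lemma two_pi_I_mem : (2 * Real.pi * I : ℂ) ∈ F := by
  obtain ⟨n, hn⟩ := exists_legendre L
  have hne := legendre_ne_zero L
  rw [hn] at hne
  have hn0 : (n : ℂ) ≠ 0 := left_ne_zero_of_mul hne
  rw [show (2 * Real.pi * I : ℂ) = (qper L L.ω₁ * L.ω₂ - qper L L.ω₂ * L.ω₁) / n by
    rw [hn]; field_simp]
  exact div_mem (sub_mem (mul_mem hF.qper₁_mem hF.ω₂_mem) (mul_mem hF.qper₂_mem hF.ω₁_mem))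
    (intCast_mem F n)

lemma rat_mul_mem_expPts (c : ℚ) {u : ℂ} (hu : u ∈ expPts F) : (c : ℂ) * u ∈ expPts F := by
  refine ⟨mul_mem (SubfieldClass.ratCast_mem F c) hu.1, ?_⟩
  refine hF.closed _ (IsAlgebraic.of_pow (n := c.den) c.den_pos ?_)
  have h : exp ((c : ℂ) * u) ^ c.den = exp u ^ c.num := by
    rw [← exp_nat_mul, ← exp_int_mul, ← mul_assoc]
    congr 2
    exact_mod_cast Rat.den_mul_eq_num c
  rw [h]
  exact isAlgebraic_algebraMap (⟨_, zpow_mem hu.2 c.num⟩ : F)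

lemma two_pi_I_mem_expPts : (2 * Real.pi * I : ℂ) ∈ expPts F :=
  ⟨hF.two_pi_I_mem, by rw [exp_two_pi_mul_I]; exact one_mem F⟩

end GoodField

/-! ### The two fields -/

/-- A good field which contains `t'`, `e^{t'}`, `p'`, `℘(p')` and `ζ(p')` for the elements of the two
bases contains all the other generators. -/
lemma GoodField.genSet_subset {L : PeriodPair} {F : Subfield ℂ} (hF : GoodField L F)
    {s n s' n' : ℕ} (hs : s' ≤ s) (hn : n' ≤ n) (t : Fin s → ℂ) (p : Fin n → ℂ)
    (hp : ∀ i, p i ∉ LatticePts L.ω₁ L.ω₂)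
    (htspan : ∀ j : Fin s, ∃ (c : Fin s' → ℚ) (a : ℚ),
      t j = (a : ℂ) * (2 * Real.pi * Complex.I) + ∑ i, (c i : ℂ) * t (Fin.castLE hs i))
    (hpspan : ∀ j : Fin n, ∃ c : Fin n' → ℂ, (∀ i, c i ∈ endQ L.ω₁ L.ω₂) ∧ ∃ a b : ℚ,
      p j = (a : ℂ) * L.ω₁ + (b : ℂ) * L.ω₂ + ∑ i, c i * p (Fin.castLE hn i))
    (h : genSet L.ω₁ L.ω₂ (t ∘ Fin.castLE hs) (p ∘ Fin.castLE hn) ⊆ F) :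
    genSet L.ω₁ L.ω₂ t p ⊆ F := by
  have hp' : ∀ i, p i ∉ L.lattice := fun i ↦ (mem_latticePts_iff L).not.mp (hp i)
  have ht' : ∀ i, t (Fin.castLE hs i) ∈ expPts F := fun i ↦
    ⟨h (by simp [genSet]), h (by simp [genSet])⟩
  have hpts' : ∀ i, p (Fin.castLE hn i) ∈ hF.pts := fun i ↦
    ⟨h (by simp [genSet]), by rw [← wP_eq L (hp' _)]; exact h (by simp [genSet]),
      h (by simp [genSet, zet])⟩
  have ht : ∀ j, t j ∈ expPts F := by
    intro j
    obtain ⟨c, a, e⟩ := htspan j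
    rw [e]
    exact add_mem (hF.rat_mul_mem_expPts a hF.two_pi_I_mem_expPts)
      (sum_mem fun i _ ↦ hF.rat_mul_mem_expPts (c i) (ht' i))
  have hpts : ∀ j, p j ∈ hF.pts := by
    intro j
    obtain ⟨c, hc, a, b, e⟩ := hpspan j
    rw [e]
    exact add_mem (hF.torsion_mem_pts a b) (sum_mem fun i _ ↦ hF.endQ_mul_mem_pts (hc i) (hpts' i))
  simp only [genSet, Set.union_subset_iff, Set.insert_subset_iff, Set.singleton_subset_iff,
    Set.range_subset_iff]
  refine ⟨⟨⟨⟨⟨⟨?_, ?_, hF.ω₁_mem, hF.ω₂_mem, hF.qper₁_mem, hF.qper₂_mem⟩, fun j ↦ (ht j).1⟩,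
    fun j ↦ (ht j).2⟩, fun j ↦ (hpts j).1⟩, fun j ↦ ?_⟩, fun j ↦ (hpts j).2.2⟩
  · rw [g2_eq]
    exact hF.g₂_mem
  · rw [g3_eq]
    exact hF.g₃_mem
  · rw [wP_eq L (hp' j)]
    exact (hpts j).2.1

lemma genSet_finite {ω₁ ω₂ : ℂ} {s n : ℕ} (t : Fin s → ℂ) (p : Fin n → ℂ) :
    (genSet ω₁ ω₂ t p).Finite := by
  simp only [genSet]
  refine Set.Finite.union (Set.Finite.union (Set.Finite.union (Set.Finite.union
    (Set.Finite.union ?_ (Set.finite_range _)) (Set.finite_range _)) (Set.finite_range _))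
    (Set.finite_range _)) (Set.finite_range _)
  simp

lemma genSet_comp_subset {ω₁ ω₂ : ℂ} {s n s' n' : ℕ} (t : Fin s → ℂ) (p : Fin n → ℂ)
    (e : Fin s' → Fin s) (e' : Fin n' → Fin n) :
    genSet ω₁ ω₂ (t ∘ e) (p ∘ e') ⊆ genSet ω₁ ω₂ t p := by
  simp only [genSet]
  have h1 (φ : ℂ → ℂ) : Set.range (fun i ↦ φ ((p ∘ e') i)) ⊆ Set.range (fun i ↦ φ (p i)) :=
    Set.range_comp_subset_range e' (fun i ↦ φ (p i))
  have h2 : Set.range (fun i ↦ exp ((t ∘ e) i)) ⊆ Set.range (fun i ↦ exp (t i)) :=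
    Set.range_comp_subset_range e (fun i ↦ exp (t i))
  have h3 := Set.range_comp_subset_range e t
  have h4 := Set.range_comp_subset_range e' p
  gcongr
  · exact h1 _
  · exact h1 _

lemma adjoin_le_algebraicClosure {S S' : Set ℂ}
    (h : ∀ x ∈ S, IsAlgebraic (IntermediateField.adjoin ℚ S') x) :
    IntermediateField.adjoin ℚ S ≤
      (algebraicClosure (IntermediateField.adjoin ℚ S') ℂ).restrictScalars ℚ :=
  IntermediateField.adjoin_le_iff.mpr fun x hx ↦ mem_algebraicClosure_iff.mpr (h x hx)

lemma isAlgebraic_adjoin_mono {S S' : Set ℂ} (h : S' ⊆ S) {x : ℂ}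
    (hx : IsAlgebraic (IntermediateField.adjoin ℚ S') x) :
    IsAlgebraic (IntermediateField.adjoin ℚ S) x := by
  let := (IntermediateField.inclusion (IntermediateField.adjoin.mono ℚ _ _ h)).toAlgebra
  have : IsScalarTower (IntermediateField.adjoin ℚ S') (IntermediateField.adjoin ℚ S) ℂ :=
    .of_algebraMap_eq fun _ ↦ rfl
  exact hx.tower_top _

lemma isAlgebraic_adjoin_of_algebraic {S S' : Set ℂ}
    (h : ∀ x ∈ S, IsAlgebraic (IntermediateField.adjoin ℚ S') x) {x : ℂ}
    (hx : IsAlgebraic (IntermediateField.adjoin ℚ S) x) :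
    IsAlgebraic (IntermediateField.adjoin ℚ S') x := by
  set K := IntermediateField.adjoin ℚ S'
  let := (IntermediateField.inclusion (adjoin_le_algebraicClosure h)).toAlgebra
  have : IsScalarTower (IntermediateField.adjoin ℚ S)
      ((algebraicClosure K ℂ).restrictScalars ℚ) ℂ := .of_algebraMap_eq fun _ ↦ rfl
  have hx' : IsAlgebraic (algebraicClosure K ℂ) x :=
    hx.tower_top ((algebraicClosure K ℂ).restrictScalars ℚ)
  exact hx'.restrictScalars K

/-- The algebraic closure in `ℂ` of a field which contains the lattice constants is a good field. -/
lemma goodField_algebraicClosure (L : PeriodPair) (K : IntermediateField ℚ ℂ)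
    (h : ({g2 L.ω₁ L.ω₂, g3 L.ω₁ L.ω₂, L.ω₁, L.ω₂, wEta L.ω₁ L.ω₂ L.ω₁, wEta L.ω₁ L.ω₂ L.ω₂} :
      Set ℂ) ⊆ (algebraicClosure K ℂ).toSubfield) :
    GoodField L (algebraicClosure K ℂ).toSubfield where
  closed x hx := by
    have hx' : IsAlgebraic (algebraicClosure K ℂ) x := hx
    exact mem_algebraicClosure_iff.mpr (hx'.restrictScalars K)
  g₂_mem := by rw [← g2_eq]; exact h (by simp)
  g₃_mem := by rw [← g3_eq]; exact h (by simp)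
  ω₁_mem := h (by simp)
  ω₂_mem := h (by simp)
  qper₁_mem := h (by simp [qper])
  qper₂_mem := h (by simp [qper])

open Cardinal in
/-- If every element of `S` is algebraic over `ℚ(S')`, then `d` algebraically independent elements
of `ℚ(S)` can be replaced by `d` algebraically independent elements of `ℚ(S')`. -/
lemma trdegGe_of_algebraic {S S' : Set ℂ}
    (h : ∀ x ∈ S, IsAlgebraic (IntermediateField.adjoin ℚ S') x) {d : ℕ} (hd : trdegGe S d) :
    trdegGe S' d := by
  obtain ⟨x, hx, hind⟩ := hd
  set K := IntermediateField.adjoin ℚ S' with hK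
  have hle := adjoin_le_algebraicClosure h
  have hind' : AlgebraicIndependent ℚ (fun i ↦ (⟨x i, hle (hx i)⟩ : algebraicClosure K ℂ)) :=
    AlgebraicIndependent.of_comp (((algebraicClosure K ℂ).val).restrictScalars ℚ) hind
  have h1 := hind'.cardinalMk_le_trdeg
  have h2 := trdeg_add_eq ℚ K (A := algebraicClosure K ℂ)
  rw [trdeg_eq_zero (R := K) (A := algebraicClosure K ℂ), add_zero] at h2
  obtain ⟨T, hT⟩ := exists_isTranscendenceBasis ℚ K
  rw [← h2, ← hT.cardinalMk_eq_trdeg, mk_fin] at h1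
  obtain ⟨e⟩ : Nonempty (Fin d ↪ T) := by
    rw [← mk_fin] at h1
    exact h1
  refine ⟨fun i ↦ ((e i : K) : ℂ), fun i ↦ (e i : K).2, ?_⟩
  exact (hT.1.comp e e.injective).map' (f := K.val) Subtype.val_injective

/-- All generators are algebraic over the field generated by the constants attached to the two bases. -/
lemma isAlgebraic_genSet (L : PeriodPair) {s n s' n' : ℕ} (hs : s' ≤ s) (hn : n' ≤ n)
    (t : Fin s → ℂ) (p : Fin n → ℂ) (hp : ∀ i, p i ∉ LatticePts L.ω₁ L.ω₂)
    (htspan : ∀ j : Fin s, ∃ (c : Fin s' → ℚ) (a : ℚ),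
      t j = (a : ℂ) * (2 * Real.pi * Complex.I) + ∑ i, (c i : ℂ) * t (Fin.castLE hs i))
    (hpspan : ∀ j : Fin n, ∃ c : Fin n' → ℂ, (∀ i, c i ∈ endQ L.ω₁ L.ω₂) ∧ ∃ a b : ℚ,
      p j = (a : ℂ) * L.ω₁ + (b : ℂ) * L.ω₂ + ∑ i, c i * p (Fin.castLE hn i)) :
    ∀ x ∈ genSet L.ω₁ L.ω₂ t p, IsAlgebraic (IntermediateField.adjoin ℚ
      (genSet L.ω₁ L.ω₂ (t ∘ Fin.castLE hs) (p ∘ Fin.castLE hn))) x := by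
  intro x hx
  set S' := genSet L.ω₁ L.ω₂ (t ∘ Fin.castLE hs) (p ∘ Fin.castLE hn) with hS'
  set K := IntermediateField.adjoin ℚ S'
  have hmem : S' ⊆ (algebraicClosure K ℂ).toSubfield := fun x hx ↦
    mem_algebraicClosure_iff.mpr
      (isAlgebraic_algebraMap (⟨x, IntermediateField.subset_adjoin ℚ _ hx⟩ : K))
  have hgood := goodField_algebraicClosure L K (fun y hy ↦ hmem (by
    rw [hS', genSet]
    simp only [Set.mem_union]
    tauto))
  exact mem_algebraicClosure_iff.mp (hgood.genSet_subset hs hn t p hp htspan hpspan hmem hx)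

end Helpers

/-- **Choice of a basis.** If `t₁, …, t_{s′}` is a `ℚ`-basis of the space generated by the
classes of `t₁, …, t_s` modulo `2πiℚ`, and `p₁, …, p_{n′}` is a `k`-basis of the space
generated by the classes of `p₁, …, p_n` modulo `ℚω₁ + ℚω₂`, then the field
`ℚ(tₗ, e^{tₗ}, g₂, g₃, ω₁, ω₂, η₁, η₂, pᵢ, ℘(pᵢ), ζ(pᵢ))_{ℓ ≤ s, i ≤ n}` is a finite
extension of `ℚ(tₗ, e^{tₗ}, g₂, g₃, ω₁, ω₂, η₁, η₂, pᵢ, ℘(pᵢ), ζ(pᵢ))_{ℓ ≤ s′, i ≤ n′}`;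
in particular the two fields have the same algebraic closure in `ℂ` and the same
transcendence degree over `ℚ`. -/
theorem choice_of_basis (ω₁ ω₂ : ℂ) (hΩ : IsLatticeBasis ω₁ ω₂)
    (s n s' n' : ℕ) (hs : s' ≤ s) (hn : n' ≤ n)
    (t : Fin s → ℂ) (p : Fin n → ℂ) (hp : ∀ i, p i ∉ LatticePts ω₁ ω₂)
    (htind : ∀ (c : Fin s' → ℚ) (a : ℚ),
      ∑ i, (c i : ℂ) * t (Fin.castLE hs i) = (a : ℂ) * (2 * Real.pi * Complex.I) →
      ∀ i, c i = 0)
    (htspan : ∀ j : Fin s, ∃ (c : Fin s' → ℚ) (a : ℚ),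
      t j = (a : ℂ) * (2 * Real.pi * Complex.I) + ∑ i, (c i : ℂ) * t (Fin.castLE hs i))
    (hpind : ∀ c : Fin n' → ℂ, (∀ i, c i ∈ endQ ω₁ ω₂) → ∀ a b : ℚ,
      ∑ i, c i * p (Fin.castLE hn i) = (a : ℂ) * ω₁ + (b : ℂ) * ω₂ → ∀ i, c i = 0)
    (hpspan : ∀ j : Fin n, ∃ c : Fin n' → ℂ, (∀ i, c i ∈ endQ ω₁ ω₂) ∧ ∃ a b : ℚ,
      p j = (a : ℂ) * ω₁ + (b : ℂ) * ω₂ + ∑ i, c i * p (Fin.castLE hn i)) :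
    FiniteDimensional
      (IntermediateField.adjoin ℚ (genSet ω₁ ω₂ (t ∘ Fin.castLE hs) (p ∘ Fin.castLE hn)))
      (IntermediateField.adjoin
        (IntermediateField.adjoin ℚ (genSet ω₁ ω₂ (t ∘ Fin.castLE hs) (p ∘ Fin.castLE hn)))
        (genSet ω₁ ω₂ t p)) ∧
    (∀ x : ℂ,
      IsAlgebraic
        (IntermediateField.adjoin ℚ (genSet ω₁ ω₂ (t ∘ Fin.castLE hs) (p ∘ Fin.castLE hn)))
        x ↔
      IsAlgebraic (IntermediateField.adjoin ℚ (genSet ω₁ ω₂ t p)) x) ∧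
    (∀ d : ℕ,
      trdegGe (genSet ω₁ ω₂ (t ∘ Fin.castLE hs) (p ∘ Fin.castLE hn)) d ↔
      trdegGe (genSet ω₁ ω₂ t p) d) := by
  have hsub := genSet_comp_subset (ω₁ := ω₁) (ω₂ := ω₂) t p (Fin.castLE hs) (Fin.castLE hn)
  have halg := isAlgebraic_genSet ⟨ω₁, ω₂, hΩ⟩ hs hn t p hp htspan hpspan
  refine ⟨?_, fun x ↦ ⟨isAlgebraic_adjoin_mono hsub, isAlgebraic_adjoin_of_algebraic halg⟩,
    fun d ↦ ⟨?_, trdegGe_of_algebraic halg⟩⟩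
  · have := (genSet_finite (ω₁ := ω₁) (ω₂ := ω₂) t p).to_subtype
    exact IntermediateField.finiteDimensional_adjoin fun x hx ↦ (halg x hx).isIntegral
  · rintro ⟨x, hx, hind⟩
    exact ⟨x, fun i ↦ IntermediateField.adjoin.mono ℚ _ _ hsub (hx i), hind⟩
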